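/- Let d ≥ 3 and let q_1, …, q_d be pairwise coprime positive integers. Assume the Γ-periodic potentials V, Y : ℤ^d → ℝ are Fermi isospectral, and that both V = ⊕_{j=1}^r V_j and Y = ⊕_{j=1}^r Y_j are (d_1,…,d_r) separable. Then for each j = 1,…,r there exists a constant C_j ∈ ℝ such that V_j + C_j and Y_j are Floquet isospectral as Γ_j-periodic potentials on ℤ^{d_j}. -/

import Mathlib

open scoped BigOperators
open Complex

noncomputable section

/-- The fundamental domain `W` for `Γ = q₁ℤ ⊕ ⋯ ⊕ q_dℤ`, as a type. -/
abbrev Cell (d : ℕ) (q : Fin d → ℕ) := (j : Fin d) → Fin (q j)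

/-- `V : ℤ^d → ℝ` is `Γ`-periodic for `Γ = q₁ℤ ⊕ ⋯ ⊕ q_dℤ`. -/
def IsPeriodicPotential (d : ℕ) (q : Fin d → ℕ) (V : (Fin d → ℤ) → ℝ) : Prop :=
  ∀ n γ : Fin d → ℤ, (∀ j, (q j : ℤ) ∣ γ j) → V (n + γ) = V n

/-- The discrete Fourier transform `V̂(l)`, defined for all `l ∈ ℤ^d`
(it is automatically `Γ`-periodic in `l`). -/
def dft (d : ℕ) (q : Fin d → ℕ) (V : (Fin d → ℤ) → ℝ) (l : Fin d → ℤ) : ℂ :=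
  (1 / ∏ j, (q j : ℂ)) *
    ∑ n : Cell d q, (V (fun j => ((n j : ℕ) : ℤ)) : ℂ) *
      Complex.exp (-(2 * Real.pi * Complex.I) * ∑ j, (l j : ℂ) * ((n j : ℕ) : ℂ) / (q j : ℂ))

/-- `ρ^j_m = e^{2πi m/q_j}`. -/
def rho (d : ℕ) (q : Fin d → ℕ) (j : Fin d) (m : ℤ) : ℂ :=
  Complex.exp (2 * Real.pi * Complex.I * (m : ℂ) / (q j : ℂ))

/-- The Floquet matrix `M_V(z)` (the matrix `A + B_V` of Lemma 2.7). -/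
def floquetMatrix (d : ℕ) (q : Fin d → ℕ) (V : (Fin d → ℤ) → ℝ) (z : Fin d → ℂ) :
    Matrix (Cell d q) (Cell d q) ℂ := fun n n' =>
  (if n = n' then ∑ j, (rho d q j (n j : ℕ) * z j + (rho d q j (n j : ℕ) * z j)⁻¹) else 0)
    + dft d q V (fun j => ((n j : ℕ) : ℤ) - ((n' j : ℕ) : ℤ))

/-- `P̃_V(z, λ) = det (M_V(z) − λ I)`. -/
def floquetDet (d : ℕ) (q : Fin d → ℕ) (V : (Fin d → ℤ) → ℝ) (z : Fin d → ℂ) (lam : ℂ) : ℂ :=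
  Matrix.det (floquetMatrix d q V z - lam • (1 : Matrix (Cell d q) (Cell d q) ℂ))

/-- `V` and `Y` are Fermi isospectral. -/
def FermiIsospectral (d : ℕ) (q : Fin d → ℕ) (V Y : (Fin d → ℤ) → ℝ) : Prop :=
  ∃ lam0 : ℂ,
    {z : Fin d → ℂ | (∀ j, z j ≠ 0) ∧ floquetDet d q V z lam0 = 0}
      = {z : Fin d → ℂ | (∀ j, z j ≠ 0) ∧ floquetDet d q Y z lam0 = 0}

/-- `V` and `Y` are Floquet isospectral. -/
def FloquetIsospectral (d : ℕ) (q : Fin d → ℕ) (V Y : (Fin d → ℤ) → ℝ) : Prop :=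
  ∀ z : Fin d → ℂ, (∀ j, z j ≠ 0) → ∀ lam : ℂ,
    floquetDet d q V z lam = floquetDet d q Y z lam

/-- The average `[V]` of `V` over one periodicity cell. -/
def potentialAvg (d : ℕ) (q : Fin d → ℕ) (V : (Fin d → ℤ) → ℝ) : ℝ :=
  (1 / ∏ j, (q j : ℝ)) * ∑ n : Cell d q, V (fun j => ((n j : ℕ) : ℤ))

/-- The embedding of the `j`-th block of coordinates into `Fin d`,
given block sizes `D : Fin r → ℕ` with `∑ j, D j = d`. -/
def blockEmbed {r d : ℕ} (D : Fin r → ℕ) (hsum : ∑ j, D j = d) (j : Fin r) (i : Fin (D j)) :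
    Fin d :=
  ⟨(∑ k ∈ Finset.univ.filter (fun k => k < j), D k) + i.1, by
    have hj : j ∉ Finset.univ.filter (fun k => k < j) := by simp
    have h2 : (∑ k ∈ Finset.univ.filter (fun k => k < j), D k) + D j ≤ ∑ k, D k := by
      calc (∑ k ∈ Finset.univ.filter (fun k => k < j), D k) + D j
          = ∑ k ∈ insert j (Finset.univ.filter (fun k => k < j)), D k := by
            rw [Finset.sum_insert hj, add_comm]
        _ ≤ ∑ k, D k := Finset.sum_le_sum_of_subset (Finset.subset_univ _)
    have h3 := i.2
    omega⟩

/-- `V` is `(D 0, …, D (r-1))` separable. -/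
def IsSeparablePotential {r : ℕ} (d : ℕ) (D : Fin r → ℕ) (hsum : ∑ j, D j = d)
    (V : (Fin d → ℤ) → ℝ) : Prop :=
  ∃ Vj : (j : Fin r) → (Fin (D j) → ℤ) → ℝ,
    ∀ n : Fin d → ℤ, V n = ∑ j, Vj j (fun i => n (blockEmbed D hsum j i))

/-!
By separability, an eigenvalue `a` of the Floquet matrix of one block of `V` and an eigenvalue
`lam0 - a` of the complementary block at a second point together give a point of the Fermi variety,
so the same number `lam0` splits as a sum of eigenvalues of the blocks of `Y` at the same points.
Now let the complementary block escape to infinity.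

* If it has dimension at least two, coprimality of the periods yields a direction along which
  exactly one entry of the leading diagonal vanishes. The corresponding eigenvalue stays bounded and
  tends to its leading coefficient plus the average of the potential, while all the others diverge.
  Comparing `V` with `Y`, the spectra of the first blocks differ by a translation by the difference
  of the two averages.
* If it has dimension one, the first block has dimension at least two, and exchanging the roles
  shows that the complementary blocks agree up to a constant. Then both blocks escape to infinity in
  a generic direction: the leading terms force the eigenvalues to match up, and simple eigenvalues
  with the same leading term differ asymptotically by the difference of the averages.

In either case this determines the characteristic polynomial of the block on a set of points `z`
large enough for the identity theorem.
-/

section Development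

open Filter Topology Polynomial
open scoped Kronecker Pointwise

/-! ### Kronecker sums and their spectra -/

theorem kronecker_mulVec_mul {m m' n n' R : Type*} [Fintype n] [Fintype n'] [CommSemiring R]
    (A : Matrix m n R) (B : Matrix m' n' R) (v : n → R) (w : n' → R) :
    (A ⊗ₖ B).mulVec (fun p ↦ v p.1 * w p.2) = fun p ↦ A.mulVec v p.1 * B.mulVec w p.2 := by
  ext p
  simp only [Matrix.mulVec, dotProduct, Matrix.kroneckerMap_apply, Fintype.sum_prod_type,
    Finset.sum_mul_sum, mul_mul_mul_comm]

section Spectrum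

variable {N N' : Type*} [Fintype N] [DecidableEq N] [Fintype N'] [DecidableEq N']
  {K : Type*} [Field K]

theorem det_sub_smul_one (A : Matrix N N K) (μ : K) :
    (A - μ • (1 : Matrix N N K)).det = (-1) ^ Fintype.card N * A.charpoly.eval μ := by
  rw [Matrix.eval_charpoly, ← Matrix.det_neg, neg_sub, Matrix.smul_one_eq_diagonal,
    Matrix.scalar_apply]

theorem mem_spectrum_iff_det_sub_smul_one_eq_zero {A : Matrix N N K} {μ : K} :
    μ ∈ spectrum K A ↔ (A - μ • (1 : Matrix N N K)).det = 0 := by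
  simp [det_sub_smul_one, Matrix.mem_spectrum_iff_isRoot_charpoly, IsRoot.def]

theorem mem_spectrum_iff_exists_mulVec_eq_smul {A : Matrix N N K} {μ : K} :
    μ ∈ spectrum K A ↔ ∃ v ≠ 0, A.mulVec v = μ • v := by
  simp [mem_spectrum_iff_det_sub_smul_one_eq_zero, ← Matrix.exists_mulVec_eq_zero_iff,
    Matrix.sub_mulVec, Matrix.smul_mulVec, sub_eq_zero]

theorem add_mem_spectrum_add_smul_one_iff {A : Matrix N N K} {c μ : K} :
    μ + c ∈ spectrum K (A + c • (1 : Matrix N N K)) ↔ μ ∈ spectrum K A := by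
  rw [add_comm A, ← Algebra.algebraMap_eq_smul_one]
  exact spectrum.add_mem_add_iff

theorem spectrum_smul_of_ne_zero (A : Matrix N N K) {c : K} (hc : c ≠ 0) :
    spectrum K (c • A) = c • spectrum K A :=
  spectrum.unit_smul_eq_smul A (Units.mk0 c hc)

theorem det_sub_smul_one_eq_of_charpoly_smul_eq {A B : Matrix N N K} {c : K} (hc : c ≠ 0)
    (h : (c • A).charpoly = (c • B).charpoly) (μ : K) :
    (A - μ • (1 : Matrix N N K)).det = (B - μ • (1 : Matrix N N K)).det := by
  have hdet := congrArg (fun p ↦ (-1) ^ Fintype.card N * p.eval (c * μ)) h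
  simp only [← det_sub_smul_one, mul_smul, ← smul_sub, Matrix.det_smul] at hdet
  exact mul_left_cancel₀ (pow_ne_zero _ hc) hdet

theorem charpoly_eq_prod_of_injective {A : Matrix N N K} {f : N → K}
    (hf : Function.Injective f) (hA : ∀ n, f n ∈ spectrum K A) :
    A.charpoly = ∏ n, (X - C (f n)) := by
  refine eq_of_monic_of_dvd_of_natDegree_le (monic_prod_X_sub_C f _) A.charpoly_monic ?_ ?_
  · exact Finset.prod_dvd_of_coprime ((pairwise_coprime_X_sub_C hf).set_pairwise _)
      fun n _ ↦ dvd_iff_isRoot.2 (Matrix.mem_spectrum_iff_isRoot_charpoly.1 (hA n))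
  · rw [A.charpoly_natDegree_eq_dim, natDegree_finsetProd_X_sub_C_eq_card, Finset.card_univ]

theorem spectrum_eq_range_of_injective {A : Matrix N N K} {f : N → K}
    (hf : Function.Injective f) (hA : ∀ n, f n ∈ spectrum K A) :
    spectrum K A = Set.range f := by
  ext μ
  simp [Matrix.mem_spectrum_iff_isRoot_charpoly, charpoly_eq_prod_of_injective hf hA, eval_prod,
    Finset.prod_eq_zero_iff, sub_eq_zero, eq_comm (a := μ)]

theorem spectrum_add_subset_of_commute [IsAlgClosed K] {A B : Matrix N N K} (h : Commute A B) :
    spectrum K (A + B) ⊆ spectrum K A + spectrum K B := by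
  intro μ hμ
  obtain ⟨v, hv, hvμ⟩ := mem_spectrum_iff_exists_mulVec_eq_smul.1 hμ
  let E := Module.End.eigenspace (A + B).toLin' μ
  have hE : ∀ w ∈ E, A.toLin' w ∈ E :=
    Module.End.mapsTo_genEigenspace_of_comm (f := (A + B).toLin') (g := A.toLin')
      (((Commute.refl A).add_left h.symm).map (Matrix.toLinAlgEquiv' (R := K))) μ 1
  have hvE : v ∈ E := by simpa [E, Module.End.mem_eigenspace_iff, Matrix.add_mulVec] using hvμ
  have : Nontrivial E := ⟨⟨⟨v, hvE⟩, 0, fun h0 ↦ hv (congrArg Subtype.val h0)⟩⟩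
  obtain ⟨a, ha⟩ := Module.End.exists_eigenvalue (A.toLin'.restrict hE)
  obtain ⟨⟨w, hwE⟩, hw⟩ := ha.exists_hasEigenvector
  have hw0 : w ≠ 0 := fun h0 ↦ hw.2 (Subtype.ext h0)
  have hwA : A.mulVec w = a • w := by simpa using congrArg Subtype.val hw.apply_eq_smul
  have hwAB : A.mulVec w + B.mulVec w = μ • w := by
    simpa [E, Module.End.mem_eigenspace_iff, Matrix.add_mulVec] using hwE
  refine Set.mem_add.2 ⟨a, mem_spectrum_iff_exists_mulVec_eq_smul.2 ⟨w, hw0, hwA⟩, μ - a,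
    mem_spectrum_iff_exists_mulVec_eq_smul.2 ⟨w, hw0, ?_⟩, add_sub_cancel a μ⟩
  rw [sub_smul, ← hwAB, hwA, add_sub_cancel_left]

theorem spectrum_kronecker_one_subset (A : Matrix N N K) :
    spectrum K (A ⊗ₖ (1 : Matrix N' N' K)) ⊆ spectrum K A := by
  intro μ hμ
  obtain ⟨v, hv, hvμ⟩ := mem_spectrum_iff_exists_mulVec_eq_smul.1 hμ
  obtain ⟨⟨i, j⟩, hij⟩ := Function.ne_iff.1 hv
  refine mem_spectrum_iff_exists_mulVec_eq_smul.2
    ⟨fun n ↦ v (n, j), Function.ne_iff.2 ⟨i, hij⟩, funext fun n ↦ ?_⟩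
  simpa [Matrix.mulVec, dotProduct, Fintype.sum_prod_type, Matrix.one_apply]
    using congrFun hvμ (n, j)

theorem spectrum_one_kronecker_subset (B : Matrix N' N' K) :
    spectrum K ((1 : Matrix N N K) ⊗ₖ B) ⊆ spectrum K B := by
  intro μ hμ
  obtain ⟨v, hv, hvμ⟩ := mem_spectrum_iff_exists_mulVec_eq_smul.1 hμ
  obtain ⟨⟨i, j⟩, hij⟩ := Function.ne_iff.1 hv
  refine mem_spectrum_iff_exists_mulVec_eq_smul.2
    ⟨fun m ↦ v (i, m), Function.ne_iff.2 ⟨j, hij⟩, funext fun m ↦ ?_⟩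
  simpa [Matrix.mulVec, dotProduct, Fintype.sum_prod_type_right, Matrix.one_apply]
    using congrFun hvμ (i, m)

theorem spectrum_kroneckerSum [IsAlgClosed K] (A : Matrix N N K) (B : Matrix N' N' K) :
    spectrum K (A ⊗ₖ (1 : Matrix N' N' K) + (1 : Matrix N N K) ⊗ₖ B)
      = spectrum K A + spectrum K B := by
  refine Set.Subset.antisymm ?_ ?_
  · have hcomm : Commute (A ⊗ₖ (1 : Matrix N' N' K)) ((1 : Matrix N N K) ⊗ₖ B) := by
      simp [Commute, SemiconjBy, ← Matrix.mul_kronecker_mul]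
    exact (spectrum_add_subset_of_commute hcomm).trans
      (Set.add_subset_add (spectrum_kronecker_one_subset A) (spectrum_one_kronecker_subset B))
  · rintro _ ⟨a, ha, b, hb, rfl⟩
    obtain ⟨v, hv, hva⟩ := mem_spectrum_iff_exists_mulVec_eq_smul.1 ha
    obtain ⟨w, hw, hwb⟩ := mem_spectrum_iff_exists_mulVec_eq_smul.1 hb
    obtain ⟨n, hn⟩ := Function.ne_iff.1 hv
    obtain ⟨m, hm⟩ := Function.ne_iff.1 hw
    refine mem_spectrum_iff_exists_mulVec_eq_smul.2
      ⟨fun p ↦ v p.1 * w p.2, Function.ne_iff.2 ⟨(n, m), mul_ne_zero hn hm⟩, ?_⟩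
    rw [Matrix.add_mulVec, kronecker_mulVec_mul, kronecker_mulVec_mul, hva, hwb]
    ext p
    simp only [Matrix.one_mulVec, Pi.add_apply, Pi.smul_apply, smul_eq_mul]
    ring

end Spectrum

/-! ### Determinants of perturbed diagonal matrices -/

theorem exists_isRoot_dist_lt {K : Type*} [NormedField K] [IsAlgClosed K] {p : K[X]}
    (hp : p.Monic) {a : K} {ε : ℝ} (hε : 0 ≤ ε) (h : ‖p.eval a‖ < ε ^ p.natDegree) :
    ∃ μ, p.IsRoot μ ∧ dist μ a < ε := by
  have hsplits := IsAlgClosed.splits p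
  by_contra! hfar
  have hroots : ∀ μ ∈ p.roots, ε ≤ ‖a - μ‖ := fun μ hμ ↦ by
    simpa [dist_eq_norm'] using hfar μ (isRoot_of_mem_roots hμ)
  refine h.not_ge ?_
  calc ε ^ p.natDegree = (p.roots.map fun _ ↦ ε).prod := by
        simp [hsplits.natDegree_eq_card_roots]
    _ ≤ (p.roots.map fun μ ↦ ‖a - μ‖).prod :=
        Multiset.prod_map_le_prod_map₀ _ _ (fun _ _ ↦ hε) hroots
    _ = ‖p.eval a‖ := by
        rw [hsplits.eval_eq_prod_roots, hp.leadingCoeff, one_mul]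
        exact p.roots.prod_hom' (normHom : K →*₀ ℝ) (a - ·)

section NearDiagonal

variable {N X K : Type*} [Fintype N] [DecidableEq N] [NormedField K] [IsAlgClosed K]
  {l : Filter X} {A : X → Matrix N N K} {α : N → K}

theorem eventually_exists_eigenvalue_mem (hA : Tendsto A l (𝓝 (Matrix.diagonal α)))
    {n : N} {S : Set K} (hS : S ∈ 𝓝 (α n)) : ∀ᶠ x in l, ∃ μ ∈ spectrum K (A x), μ ∈ S := by
  obtain ⟨ε, hε, hball⟩ := Metric.mem_nhds_iff.1 hS
  have hdet : Tendsto (fun x ↦ (Matrix.scalar N (α n) - A x).det) l (𝓝 0) := by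
    have hzero : (Matrix.scalar N (α n) - Matrix.diagonal α).det = 0 := by
      rw [Matrix.scalar_apply, Matrix.diagonal_sub, Matrix.det_diagonal]
      exact Finset.prod_eq_zero (Finset.mem_univ n) (sub_self _)
    have hcont : Continuous fun M : Matrix N N K ↦ (Matrix.scalar N (α n) - M).det :=
      (continuous_const.sub continuous_id).matrix_det
    exact hzero ▸ (hcont.tendsto _).comp hA
  filter_upwards [hdet.norm.eventually_lt_const
    (by simpa using pow_pos hε (Fintype.card N))] with x hx
  obtain ⟨μ, hμ, hdist⟩ := exists_isRoot_dist_lt (A x).charpoly_monic hε.le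
    (by rwa [Matrix.eval_charpoly, Matrix.charpoly_natDegree_eq_dim])
  exact ⟨μ, Matrix.mem_spectrum_iff_isRoot_charpoly.2 hμ, hball hdist⟩

theorem eventually_exists_injective_eigenvalues_mem (hα : Function.Injective α)
    (hA : Tendsto A l (𝓝 (Matrix.diagonal α))) {S : N → Set K} (hS : ∀ n, S n ∈ 𝓝 (α n)) :
    ∀ᶠ x in l, ∃ f : N → K, Function.Injective f ∧ ∀ n, f n ∈ spectrum K (A x) ∧ f n ∈ S n := by
  obtain ⟨U, hU, hdisj⟩ := (Set.finite_range α).t2_separation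
  filter_upwards [eventually_all.2 fun n ↦ eventually_exists_eigenvalue_mem hA
    (inter_mem (hS n) ((hU (α n)).2.mem_nhds (hU (α n)).1))] with x hx
  choose f hf hmem using hx
  refine ⟨f, fun n m hnm ↦ hα ?_, fun n ↦ ⟨hf n, (hmem n).1⟩⟩
  exact hdisj.elim_set (Set.mem_range_self n) (Set.mem_range_self m) (f n) (hmem n).2
    (hnm ▸ (hmem m).2)

theorem exists_tendsto_eigenvalue {l : Ultrafilter X} (hα : Function.Injective α)
    (hA : Tendsto A l (𝓝 (Matrix.diagonal α))) {μ : X → K}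
    (hμ : ∀ᶠ x in l, μ x ∈ spectrum K (A x)) : ∃ n, Tendsto μ l (𝓝 (α n)) := by
  by_contra! hnot
  simp only [tendsto_iff_forall_eventually_mem, not_forall, ← Ultrafilter.eventually_not]
    at hnot
  choose S hS hfar using hnot
  obtain ⟨x, hx, hfar, ⟨f, hinj, hf⟩⟩ := (hμ.and ((eventually_all.2 hfar).and
    (eventually_exists_injective_eigenvalues_mem hα hA hS))).exists
  rw [spectrum_eq_range_of_injective hinj fun n ↦ (hf n).1] at hx
  obtain ⟨n, hn⟩ := hx
  exact hfar n (hn ▸ (hf n).2)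

theorem eventuallyEq_of_tendsto_eigenvalue (hα : Function.Injective α)
    (hA : Tendsto A l (𝓝 (Matrix.diagonal α))) {μ ν : X → K} {n : N}
    (hμ : ∀ᶠ x in l, μ x ∈ spectrum K (A x)) (hμn : Tendsto μ l (𝓝 (α n)))
    (hν : ∀ᶠ x in l, ν x ∈ spectrum K (A x)) (hνn : Tendsto ν l (𝓝 (α n))) : μ =ᶠ[l] ν := by
  obtain ⟨U, hU, hdisj⟩ := (Set.finite_range α).t2_separation
  have hUn (m : N) : U (α m) ∈ 𝓝 (α m) := (hU (α m)).2.mem_nhds (hU (α m)).1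
  filter_upwards [hμ, hν, hμn (hUn n), hνn (hUn n),
    eventually_exists_injective_eigenvalues_mem hα hA hUn] with x hμ hν hμn hνn ⟨f, hinj, hf⟩
  have hunique : ∀ τ ∈ spectrum K (A x), τ ∈ U (α n) → τ = f n := by
    rw [spectrum_eq_range_of_injective hinj fun m ↦ (hf m).1]
    rintro _ ⟨m, rfl⟩ hm
    exact congrArg f (hα (hdisj.elim_set (Set.mem_range_self m) (Set.mem_range_self n) _
      (hf m).2 hm))
  rw [hunique _ hμ hμn, hunique _ hν hνn]

theorem eventually_charpoly_eq_of_spectrum_subset (hα : Function.Injective α)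
    (hA : Tendsto A l (𝓝 (Matrix.diagonal α))) :
    ∀ᶠ x in l, ∀ B : Matrix N N K, spectrum K (A x) ⊆ spectrum K B →
      B.charpoly = (A x).charpoly := by
  filter_upwards [eventually_exists_injective_eigenvalues_mem hα hA fun _ ↦ univ_mem]
    with x ⟨f, hinj, hf⟩ B hB
  rw [charpoly_eq_prod_of_injective hinj fun n ↦ (hf n).1,
    charpoly_eq_prod_of_injective hinj fun n ↦ hB (hf n).1]

end NearDiagonal

theorem exists_tendsto_root_of_deriv_ne_zero {𝕜 E : Type*} [RCLike 𝕜] [NormedAddCommGroup E]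
    [NormedSpace 𝕜 E] [CompleteSpace E] {g : E × 𝕜 → 𝕜} {p : E} {t : 𝕜}
    (hg : ContDiffAt 𝕜 1 g (p, t)) (h0 : g (p, t) = 0) (h1 : deriv (fun s ↦ g (p, s)) t ≠ 0) :
    ∃ φ : E → 𝕜, Tendsto φ (𝓝 p) (𝓝 t) ∧ ∀ᶠ x in 𝓝 p, g (x, φ x) = 0 := by
  have hpartial : fderiv 𝕜 g (p, t) (0, 1) = deriv (fun s ↦ g (p, s)) t :=
    ((hg.differentiableAt one_ne_zero).hasFDerivAt.comp_hasDerivAt t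
      ((hasDerivAt_const t p).prodMk (hasDerivAt_id t))).deriv.symm
  have hinv : (fderiv 𝕜 g (p, t) ∘L .inr 𝕜 E 𝕜).IsInvertible := by
    refine ⟨ContinuousLinearEquiv.unitsEquivAut 𝕜 (Units.mk0 _ h1), ?_⟩
    ext
    simp [← hpartial]
  have hstrict := hg.hasStrictFDerivAt one_ne_zero
  exact ⟨_, hstrict.tendsto_implicitFunctionOfProdDomain hinv,
    (hstrict.eventually_apply_implicitFunctionOfProdDomain hinv).mono fun x hx ↦ hx.trans h0⟩

theorem analyticAt_matrix_det {𝕜 E N : Type*} [NontriviallyNormedField 𝕜] [NormedAddCommGroup E]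
    [NormedSpace 𝕜 E] [Fintype N] [DecidableEq N] {A : E → Matrix N N 𝕜} {x : E}
    (hA : ∀ i j, AnalyticAt 𝕜 (fun y ↦ A y i j) x) : AnalyticAt 𝕜 (fun y ↦ (A y).det) x := by
  simp only [Matrix.det_apply']
  exact Finset.analyticAt_fun_sum _ fun σ _ ↦
    analyticAt_const.mul (Finset.analyticAt_fun_prod _ fun i _ ↦ hA _ _)

section RowScaling

variable {N K : Type*} [Fintype N] [DecidableEq N] [Field K]

/-- The determinant of `diag α + S E`, where `S` multiplies every row but the `n₀`-th by `u`. -/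
def rowScaledDet (α : N → K) (n₀ : N) (u : K) (E : Matrix N N K) : K :=
  (Matrix.diagonal α + Matrix.diagonal (Function.update (fun _ ↦ u) n₀ 1) * E).det

theorem det_inv_smul_diagonal_add_eq_zero_iff {α : N → K} {n₀ : N} (hα : α n₀ = 0) {u : K}
    (hu : u ≠ 0) (E : Matrix N N K) :
    (u⁻¹ • Matrix.diagonal α + E).det = 0 ↔ rowScaledDet α n₀ u E = 0 := by
  have hscale : Matrix.diagonal (Function.update (fun _ ↦ u) n₀ 1)
      * (u⁻¹ • Matrix.diagonal α + E) = Matrix.diagonal α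
        + Matrix.diagonal (Function.update (fun _ ↦ u) n₀ 1) * E := by
    rw [mul_add, Matrix.mul_smul, Matrix.diagonal_mul_diagonal, ← Matrix.diagonal_smul]
    congr 2
    ext n
    rcases eq_or_ne n n₀ with rfl | hn
    · simp [hα]
    · simp [hn, hu]
  have hdet : (Matrix.diagonal (Function.update (fun _ ↦ u) n₀ 1) : Matrix N N K).det ≠ 0 := by
    rw [Matrix.det_diagonal, Finset.prod_update_of_mem (Finset.mem_univ _)]
    simp [hu]
  rw [rowScaledDet, ← hscale, Matrix.det_mul, mul_eq_zero, or_iff_right hdet]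

theorem rowScaledDet_zero {α : N → K} {n₀ : N} (hα : α n₀ = 0) (E : Matrix N N K) :
    rowScaledDet α n₀ 0 E = (∏ n, Function.update α n₀ 1 n) * E n₀ n₀ := by
  have hrow : Matrix.diagonal α + Matrix.diagonal (Function.update (fun _ ↦ 0) n₀ 1) * E
      = Matrix.diagonal (Function.update α n₀ 1)
        * (1 : Matrix N N K).updateRow n₀ (E n₀) := by
    ext n m
    rcases eq_or_ne n n₀ with rfl | hn
    · simp [Matrix.diagonal_apply, hα]
    · simp [Matrix.diagonal_apply, Matrix.one_apply, hn]
  rw [rowScaledDet, hrow, Matrix.det_mul, Matrix.det_diagonal, ← Matrix.cramer_transpose_apply,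
    Matrix.transpose_one, Matrix.cramer_one, Module.End.one_apply]

end RowScaling

/-! ### Directions of escape -/

theorem exists_dotProduct_eq_zero_forall_ne_zero {ι m K : Type*} [Finite ι] [Fintype m] [Field K]
    [Infinite K] (w : m → K) (v : ι → m → K) (hv : ∀ i, v i ∉ K ∙ w) :
    ∃ x, w ⬝ᵥ x = 0 ∧ ∀ i, v i ⬝ᵥ x ≠ 0 := by
  classical
  let dual : (m → K) ≃ₗ[K] Module.Dual K (m → K) := dotProductEquiv K m
  have hsep (i : ι) : ∃ x ∈ LinearMap.ker (dual w), dual (v i) x ≠ 0 := by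
    obtain ⟨f, hf, hle⟩ := Submodule.exists_le_ker_of_notMem (hv i)
    obtain ⟨x, rfl⟩ := dual.surjective f
    have hwx := hle (Submodule.mem_span_singleton_self w)
    simp only [dual, dotProductEquiv_apply_apply, LinearMap.mem_ker] at hf hwx ⊢
    exact ⟨x, by rwa [dotProduct_comm], by rwa [dotProduct_comm]⟩
  obtain ⟨x, hx, hne⟩ := Module.Dual.exists_forall_mem_ne_zero_of_forall_exists _ _ hsep
  exact ⟨x, hx, hne⟩

section Rho

variable {d : ℕ} {q : Fin d → ℕ} {j : Fin d}

theorem rho_zero : rho d q j 0 = 1 := by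
  simp [rho]

theorem rho_ne_zero {m : ℤ} : rho d q j m ≠ 0 :=
  exp_ne_zero _

variable [NeZero (q j)]

theorem rho_pow {m : ℤ} : rho d q j m ^ q j = 1 := by
  have hq : (q j : ℂ) ≠ 0 := NeZero.ne _
  rw [rho, ← exp_nat_mul, mul_div_cancel₀ _ hq, exp_eq_one_iff]
  exact ⟨m, mul_comm _ _⟩

theorem rho_injective : Function.Injective fun m : Fin (q j) ↦ rho d q j ((m : ℕ) : ℤ) := by
  intro m n h
  have hpow (k : ℕ) : rho d q j (k : ℤ) = exp (2 * Real.pi * I / q j) ^ k := by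
    rw [rho, ← exp_nat_mul]
    push_cast
    ring_nf
  simp only [hpow] at h
  exact Fin.ext ((isPrimitiveRoot_exp _ (NeZero.ne _)).pow_inj m.2 n.2 h)

end Rho

/-- The symbol of the leading part of the Floquet matrix at infinity: along `z = u⁻¹ x`, the
matrix `u • M_V(z)` tends to the diagonal matrix with entries `leadingSymbol q x` as `u → 0`. -/
def leadingSymbol {d : ℕ} (q : Fin d → ℕ) (x : Fin d → ℂ) (n : Cell d q) : ℂ :=
  (fun j ↦ rho d q j (n j : ℕ)) ⬝ᵥ x

section Directions

variable {d : ℕ} {q : Fin d → ℕ} [∀ j, NeZero (q j)]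

theorem eq_one_of_rho_eq_mul_rho {R : ℕ} {j : Fin d} {m n : ℤ} {ζ : ℂ} (hR : R.Coprime (q j))
    (hζ : ζ ^ R = 1) (h : rho d q j m = ζ * rho d q j n) : ζ = 1 := by
  have hq : ζ ^ q j = 1 := by
    simpa [mul_pow, rho_pow] using (congrArg (· ^ q j) h).symm
  simpa [hR.gcd_eq_one] using pow_gcd_eq_one.2 ⟨hζ, hq⟩

theorem exists_generic_direction [NeZero d] {R : ℕ} [NeZero R] (hR : ∀ j, R.Coprime (q j)) :
    ∃ x : Fin d → ℂ, (∀ j, x j ≠ 0) ∧ (∀ n, leadingSymbol q x n ≠ 0) ∧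
      ∀ m n (ζ : ℂ), ζ ^ R = 1 → leadingSymbol q x m = ζ * leadingSymbol q x n → m = n ∧ ζ = 1 := by
  classical
  let v : Cell d q → Fin d → ℂ := fun n j ↦ rho d q j (n j : ℕ)
  let ι := {p : Cell d q × Cell d q × rootsOfUnity R ℂ // v p.1 ≠ (p.2.2 : ℂˣ) • v p.2.1}
  let w : Fin d ⊕ Cell d q ⊕ ι → Fin d → ℂ := Sum.elim (fun j ↦ Pi.single j 1)
    (Sum.elim v fun p ↦ v p.1.1 - (p.1.2.2 : ℂˣ) • v p.1.2.1)
  have hw : ∀ i, w i ∉ ℂ ∙ (0 : Fin d → ℂ) := by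
    rintro (j | n | p) <;> rw [Submodule.span_zero_singleton, Submodule.mem_bot]
    · simp [w]
    · exact fun h ↦ rho_ne_zero (congrFun h 0)
    · simpa [w, sub_eq_zero] using p.2
  obtain ⟨x, -, hx⟩ := exists_dotProduct_eq_zero_forall_ne_zero 0 w hw
  refine ⟨x, fun j ↦ by simpa [w] using hx (.inl j), fun n ↦ hx (.inr (.inl n)), ?_⟩
  intro m n ζ hζ hmn
  have hv : v m = ζ • v n := by
    by_contra hne
    let ζ' : rootsOfUnity R ℂ := rootsOfUnity.mkOfPowEq ζ hζ
    refine hx (.inr (.inr ⟨(m, n, ζ'), hne⟩)) ?_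
    simpa [w, ζ', v, leadingSymbol, sub_dotProduct, sub_eq_zero, Units.smul_def] using hmn
  have hζ1 : ζ = 1 := eq_one_of_rho_eq_mul_rho (hR 0) hζ (congrFun hv 0)
  exact ⟨funext fun j ↦ rho_injective (by simpa [hζ1] using congrFun hv j), hζ1⟩

theorem exists_direction_leadingSymbol_eq_zero_iff (hd : 2 ≤ d)
    (hco : Pairwise fun i j ↦ (q i).Coprime (q j)) :
    ∃ x : Fin d → ℂ, (∀ j, x j ≠ 0) ∧ ∀ n, leadingSymbol q x n = 0 ↔ n = 0 := by
  classical
  have hfin : Nontrivial (Fin d) := Fin.nontrivial_iff_two_le.2 hd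
  let v : Cell d q → Fin d → ℂ := fun n j ↦ rho d q j (n j : ℕ)
  let w : Fin d ⊕ {n : Cell d q // n ≠ 0} → Fin d → ℂ :=
    Sum.elim (fun j ↦ Pi.single j 1) fun n ↦ v n
  have hw : ∀ i, w i ∉ ℂ ∙ v 0 := by
    intro i hi
    obtain ⟨c, hc⟩ := Submodule.mem_span_singleton.1 hi
    have hconst (k : Fin d) : w i k = c := by simp [← hc, v, rho_zero]
    rcases i with j | ⟨n, hn⟩
    · obtain ⟨k, hk⟩ := exists_ne j
      have h01 := (hconst j).trans (hconst k).symm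
      simp [w, hk] at h01
    · refine hn (funext fun j ↦ rho_injective ?_)
      obtain ⟨k, hk⟩ := exists_ne j
      have hc : c ^ q k = 1 := hconst k ▸ rho_pow
      have hc1 := eq_one_of_rho_eq_mul_rho (hco hk) hc
        (show rho d q j (n j : ℕ) = c * rho d q j 0 by simpa [w, v, rho_zero] using hconst j)
      simpa [w, v, rho_zero, hc1] using hconst j
  obtain ⟨x, hx0, hx⟩ := exists_dotProduct_eq_zero_forall_ne_zero (v 0) w hw
  refine ⟨x, fun j ↦ by simpa [w] using hx (.inl j), fun n ↦ ⟨fun hn ↦ ?_, fun hn ↦ hn ▸ hx0⟩⟩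
  by_contra hne
  exact hx (.inr ⟨n, hne⟩) hn

end Directions

/-! ### The Floquet matrix near infinity -/

section Expansion

variable {d : ℕ} {q : Fin d → ℕ} {V Y : (Fin d → ℤ) → ℝ}

/-- The matrix `B_V` of the potential in the Fourier basis, with entries `V̂(n - n')`. -/
def potentialMatrix (q : Fin d → ℕ) (V : (Fin d → ℤ) → ℝ) : Matrix (Cell d q) (Cell d q) ℂ :=
  .of fun n n' ↦ dft d q V fun j ↦ ((n j : ℕ) : ℤ) - ((n' j : ℕ) : ℤ)

theorem floquetMatrix_eq_diagonal_add (q : Fin d → ℕ) (V : (Fin d → ℤ) → ℝ) (z : Fin d → ℂ) :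
    floquetMatrix d q V z = Matrix.diagonal (fun n ↦ ∑ j, (rho d q j (n j : ℕ) * z j
      + (rho d q j (n j : ℕ) * z j)⁻¹)) + potentialMatrix q V :=
  rfl

/-- The part of the Floquet matrix at `z = u⁻¹ x` that stays bounded as `u → 0`. -/
def boundedPart (q : Fin d → ℕ) (V : (Fin d → ℤ) → ℝ) (x : Fin d → ℂ) (u : ℂ) :
    Matrix (Cell d q) (Cell d q) ℂ :=
  Matrix.diagonal (fun n ↦ u * ∑ j, (rho d q j (n j : ℕ) * x j)⁻¹) + potentialMatrix q V

theorem floquetMatrix_inv_smul (x : Fin d → ℂ) (u : ℂ) :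
    floquetMatrix d q V (u⁻¹ • x)
      = u⁻¹ • Matrix.diagonal (leadingSymbol q x) + boundedPart q V x u := by
  ext n m
  rcases eq_or_ne n m with rfl | h
  · simp [floquetMatrix, boundedPart, potentialMatrix, leadingSymbol, dotProduct, mul_left_comm,
      Finset.sum_add_distrib, Finset.mul_sum, mul_comm _ u, add_assoc]
  · simp [floquetMatrix, boundedPart, potentialMatrix, h]

/-- The matrix `u • M_V(u⁻¹ x)`, extended analytically to `u = 0`. -/
def scaledFloquetMatrix (q : Fin d → ℕ) (V : (Fin d → ℤ) → ℝ) (x : Fin d → ℂ) (u : ℂ) :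
    Matrix (Cell d q) (Cell d q) ℂ :=
  Matrix.diagonal (leadingSymbol q x) + u • boundedPart q V x u

theorem smul_floquetMatrix_inv_smul (x : Fin d → ℂ) {u : ℂ} (hu : u ≠ 0) :
    u • floquetMatrix d q V (u⁻¹ • x) = scaledFloquetMatrix q V x u := by
  rw [floquetMatrix_inv_smul, smul_add, smul_inv_smul₀ hu, scaledFloquetMatrix]

theorem mul_mem_spectrum_scaledFloquetMatrix_iff {x : Fin d → ℂ} {u μ : ℂ} (hu : u ≠ 0) :
    u * μ ∈ spectrum ℂ (scaledFloquetMatrix q V x u)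
      ↔ μ ∈ spectrum ℂ (floquetMatrix d q V (u⁻¹ • x)) := by
  rw [← smul_floquetMatrix_inv_smul x hu, spectrum_smul_of_ne_zero _ hu, ← smul_eq_mul,
    Set.smul_mem_smul_set_iff₀ hu]

variable {E : Type*} [NormedAddCommGroup E] [NormedSpace ℂ E] {p : E} {f : E → Fin d → ℂ}
  {g : E → ℂ}

theorem analyticAt_leadingSymbol (hf : AnalyticAt ℂ f p) (n : Cell d q) :
    AnalyticAt ℂ (fun y ↦ leadingSymbol q (f y) n) p := by
  rw [analyticAt_pi_iff] at hf
  simp only [leadingSymbol, dotProduct]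
  exact Finset.analyticAt_fun_sum _ fun j _ ↦ analyticAt_const.fun_mul (hf j)

theorem analyticAt_boundedPart (hf : AnalyticAt ℂ f p) (hf0 : ∀ j, f p j ≠ 0)
    (hg : AnalyticAt ℂ g p) (n m : Cell d q) :
    AnalyticAt ℂ (fun y ↦ boundedPart q V (f y) (g y) n m) p := by
  rw [analyticAt_pi_iff] at hf
  have hsum : AnalyticAt ℂ (fun y ↦ ∑ j, (rho d q j (n j : ℕ) * f y j)⁻¹) p :=
    Finset.analyticAt_fun_sum _ fun j _ ↦
      (analyticAt_const.mul (hf j)).inv (mul_ne_zero rho_ne_zero (hf0 j))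
  simp only [boundedPart, Matrix.add_apply, Matrix.diagonal_apply]
  split_ifs
  · exact (hg.mul hsum).add analyticAt_const
  · exact analyticAt_const

theorem analyticAt_scaledFloquetMatrix (hf : AnalyticAt ℂ f p) (hf0 : ∀ j, f p j ≠ 0)
    (hg : AnalyticAt ℂ g p) (n m : Cell d q) :
    AnalyticAt ℂ (fun y ↦ scaledFloquetMatrix q V (f y) (g y) n m) p := by
  simp only [scaledFloquetMatrix, Matrix.add_apply, Matrix.smul_apply, smul_eq_mul,
    Matrix.diagonal_apply]
  have hbounded := hg.mul (analyticAt_boundedPart (V := V) hf hf0 hg n m)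
  split_ifs
  · exact (analyticAt_leadingSymbol hf n).add hbounded
  · exact analyticAt_const.add hbounded

theorem tendsto_scaledFloquetMatrix {X : Type*} {l : Filter X} {w : X → Fin d → ℂ} {u : X → ℂ}
    {x : Fin d → ℂ} (hx : ∀ j, x j ≠ 0) (hw : Tendsto w l (𝓝 x)) (hu : Tendsto u l (𝓝 0)) :
    Tendsto (fun p ↦ scaledFloquetMatrix q V (w p) (u p)) l
      (𝓝 (Matrix.diagonal (leadingSymbol q x))) := by
  have hcont : ContinuousAt (fun p : (Fin d → ℂ) × ℂ ↦ scaledFloquetMatrix q V p.1 p.2) (x, 0) :=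
    continuousAt_pi.2 fun n ↦ continuousAt_pi.2 fun m ↦
      (analyticAt_scaledFloquetMatrix analyticAt_fst hx analyticAt_snd n m).continuousAt
  simpa [scaledFloquetMatrix, Function.comp_def] using hcont.tendsto.comp (hw.prodMk_nhds hu)

section Escaping

variable {X : Type*} {u μ ν : X → ℂ} {w : X → Fin d → ℂ} {x : Fin d → ℂ}

theorem eventually_mul_mem_spectrum_scaledFloquetMatrix {l : Filter X}
    (hu : Tendsto u l (𝓝[≠] 0))
    (hμ : ∀ᶠ p in l, μ p ∈ spectrum ℂ (floquetMatrix d q V ((u p)⁻¹ • w p))) :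
    ∀ᶠ p in l, u p * μ p ∈ spectrum ℂ (scaledFloquetMatrix q V (w p) (u p)) := by
  filter_upwards [hu.eventually_mem self_mem_nhdsWithin, hμ] with p hp hμ
  exact (mul_mem_spectrum_scaledFloquetMatrix_iff hp).2 hμ

theorem exists_tendsto_mul_eigenvalue {l : Ultrafilter X}
    (hinj : Function.Injective (leadingSymbol q x)) (hx : ∀ j, x j ≠ 0)
    (hu : Tendsto u l (𝓝[≠] 0)) (hw : Tendsto w l (𝓝 x))
    (hμ : ∀ᶠ p in l, μ p ∈ spectrum ℂ (floquetMatrix d q V ((u p)⁻¹ • w p))) :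
    ∃ n, Tendsto (fun p ↦ u p * μ p) l (𝓝 (leadingSymbol q x n)) :=
  exists_tendsto_eigenvalue hinj
    (tendsto_scaledFloquetMatrix hx hw (tendsto_nhds_of_tendsto_nhdsWithin hu))
    (eventually_mul_mem_spectrum_scaledFloquetMatrix hu hμ)

theorem eventuallyEq_of_tendsto_mul_eigenvalue {l : Filter X}
    (hinj : Function.Injective (leadingSymbol q x)) (hx : ∀ j, x j ≠ 0)
    (hu : Tendsto u l (𝓝[≠] 0)) (hw : Tendsto w l (𝓝 x)) {n : Cell d q}
    (hμ : ∀ᶠ p in l, μ p ∈ spectrum ℂ (floquetMatrix d q V ((u p)⁻¹ • w p)))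
    (hμn : Tendsto (fun p ↦ u p * μ p) l (𝓝 (leadingSymbol q x n)))
    (hν : ∀ᶠ p in l, ν p ∈ spectrum ℂ (floquetMatrix d q V ((u p)⁻¹ • w p)))
    (hνn : Tendsto (fun p ↦ u p * ν p) l (𝓝 (leadingSymbol q x n))) : μ =ᶠ[l] ν := by
  filter_upwards [hu.eventually_mem self_mem_nhdsWithin, eventuallyEq_of_tendsto_eigenvalue hinj
    (tendsto_scaledFloquetMatrix hx hw (tendsto_nhds_of_tendsto_nhdsWithin hu))
    (eventually_mul_mem_spectrum_scaledFloquetMatrix hu hμ) hμn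
    (eventually_mul_mem_spectrum_scaledFloquetMatrix hu hν) hνn] with p hp heq
  exact mul_left_cancel₀ hp heq

end Escaping

end Expansion

section IdentityTheorem

variable {d : ℕ} {q : Fin d → ℕ} {V Y : (Fin d → ℤ) → ℝ}

theorem mem_spectrum_floquetMatrix_iff_of_floquetIsospectral (h : FloquetIsospectral d q V Y)
    {z : Fin d → ℂ} (hz : ∀ j, z j ≠ 0) {μ : ℂ} :
    μ ∈ spectrum ℂ (floquetMatrix d q V z) ↔ μ ∈ spectrum ℂ (floquetMatrix d q Y z) := by
  have hdet := h z hz μ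
  rw [floquetDet, floquetDet] at hdet
  rw [mem_spectrum_iff_det_sub_smul_one_eq_zero, mem_spectrum_iff_det_sub_smul_one_eq_zero, hdet]

theorem analyticAt_floquetDet (lam : ℂ) {z : Fin d → ℂ} (hz : ∀ j, z j ≠ 0) :
    AnalyticAt ℂ (fun z ↦ floquetDet d q V z lam) z := by
  refine analyticAt_matrix_det fun n m ↦ ?_
  have hentry := analyticAt_scaledFloquetMatrix (q := q) (V := V) (f := id)
    analyticAt_id hz (analyticAt_const (v := (1 : ℂ))) n m
  simp only [← smul_floquetMatrix_inv_smul _ one_ne_zero] at hentry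
  simpa using hentry.fun_sub analyticAt_const

theorem floquetIsospectral_of_eventually_eq {z₀ : Fin d → ℂ} (hz₀ : ∀ j, z₀ j ≠ 0)
    (h : ∀ᶠ z in 𝓝 z₀, ∀ lam, floquetDet d q V z lam = floquetDet d q Y z lam) :
    FloquetIsospectral d q V Y := by
  intro z hz lam
  have hU : IsPreconnected (Set.univ.pi fun _ : Fin d ↦ ({0}ᶜ : Set ℂ)) :=
    isPreconnected_univ_pi fun _ ↦
      (isConnected_compl_singleton_of_one_lt_rank (by simp) 0).isPreconnected
  have han (W : (Fin d → ℤ) → ℝ) : AnalyticOnNhd ℂ (fun z ↦ floquetDet d q W z lam)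
      (Set.univ.pi fun _ : Fin d ↦ ({0}ᶜ : Set ℂ)) :=
    fun w hw ↦ analyticAt_floquetDet lam fun j ↦ hw j trivial
  exact (han V).eqOn_of_preconnected_of_eventuallyEq (han Y) hU (fun j _ ↦ hz₀ j)
    (h.mono fun w hw ↦ hw lam) fun j _ ↦ hz j

theorem floquetIsospectral_of_eventually_spectrum_subset {x : Fin d → ℂ} (hx : ∀ j, x j ≠ 0)
    (hinj : Function.Injective (leadingSymbol q x))
    (h : ∀ᶠ p : ℂ × (Fin d → ℂ) in 𝓝 (0, x), p.1 ≠ 0 →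
      spectrum ℂ (floquetMatrix d q V (p.1⁻¹ • p.2))
        ⊆ spectrum ℂ (floquetMatrix d q Y (p.1⁻¹ • p.2))) :
    FloquetIsospectral d q V Y := by
  have hcharpoly : ∀ᶠ p : ℂ × (Fin d → ℂ) in 𝓝 (0, x), p.1 ≠ 0 → ∀ lam,
      floquetDet d q V (p.1⁻¹ • p.2) lam = floquetDet d q Y (p.1⁻¹ • p.2) lam := by
    filter_upwards [h, eventually_charpoly_eq_of_spectrum_subset hinj
      (tendsto_scaledFloquetMatrix (V := V) hx (continuous_snd.tendsto (0, x))
        (continuous_fst.tendsto (0, x)))] with ⟨u, x'⟩ hsub heq hu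
    rw [← smul_floquetMatrix_inv_smul _ hu] at heq
    refine det_sub_smul_one_eq_of_charpoly_smul_eq hu (heq _ ?_).symm
    rw [spectrum_smul_of_ne_zero _ hu, spectrum_smul_of_ne_zero _ hu]
    exact Set.smul_set_mono (hsub hu)
  rw [nhds_prod_eq] at hcharpoly
  obtain ⟨u, hu', hu⟩ : ∃ u : ℂ, (∀ᶠ x' in 𝓝 x, u ≠ 0 → ∀ lam,
      floquetDet d q V (u⁻¹ • x') lam = floquetDet d q Y (u⁻¹ • x') lam) ∧ u ≠ 0 :=
    ((hcharpoly.curry.filter_mono nhdsWithin_le_nhds).and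
      (self_mem_nhdsWithin : {(0 : ℂ)}ᶜ ∈ 𝓝[≠] 0)).exists
  refine floquetIsospectral_of_eventually_eq (z₀ := u⁻¹ • x) (by simp [hu, hx]) ?_
  have hscale : Tendsto (fun z : Fin d → ℂ ↦ u • z) (𝓝 (u⁻¹ • x)) (𝓝 x) := by
    simpa [hu] using ((continuous_const_smul u).tendsto (u⁻¹ • x))
  filter_upwards [hscale.eventually hu'] with z hz
  simpa [hu] using hz hu

end IdentityTheorem

/-! ### The potential in Fourier space -/

section Fourier

variable {d : ℕ} {q : Fin d → ℕ} {V Y : (Fin d → ℤ) → ℝ}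

theorem prod_rho_neg_mul (l : Fin d → ℤ) (n : Cell d q) :
    ∏ j, rho d q j (-(l j * (n j : ℕ))) = exp (-(2 * Real.pi * I)
      * ∑ j, (l j : ℂ) * ((n j : ℕ) : ℂ) / (q j : ℂ)) := by
  simp only [rho, ← exp_sum, Finset.mul_sum]
  push_cast
  congr! 2
  ring

theorem dft_eq_sum_prod_rho (l : Fin d → ℤ) :
    dft d q V l = (∏ j, (q j : ℂ))⁻¹ *
      ∑ n : Cell d q, V (fun j ↦ ((n j : ℕ) : ℤ)) * ∏ j, rho d q j (-(l j * (n j : ℕ))) := by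
  simp only [prod_rho_neg_mul, dft, one_div]

theorem dft_zero : dft d q V 0 = potentialAvg d q V := by
  simp [dft, potentialAvg]

theorem dft_add (l : Fin d → ℤ) :
    dft d q (fun n ↦ V n + Y n) l = dft d q V l + dft d q Y l := by
  simp [dft, add_mul, mul_add, Finset.sum_add_distrib]

theorem potentialMatrix_add :
    potentialMatrix q (fun n ↦ V n + Y n) = potentialMatrix q V + potentialMatrix q Y := by
  ext n m
  exact dft_add _

theorem rho_eq_one_iff {j : Fin d} [NeZero (q j)] {m : ℤ} :
    rho d q j m = 1 ↔ (q j : ℤ) ∣ m := by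
  have hq : (q j : ℂ) ≠ 0 := NeZero.ne _
  rw [rho, exp_eq_one_iff, Dvd.dvd.eq_def]
  refine exists_congr fun k ↦ ?_
  rw [div_eq_iff hq, mul_comm _ (m : ℂ), mul_right_comm (k : ℂ), mul_eq_mul_right_iff,
    or_iff_left two_pi_I_ne_zero, mul_comm (k : ℂ)]
  norm_cast

theorem sum_rho_mul {j : Fin d} [NeZero (q j)] (m : ℤ) :
    ∑ k : Fin (q j), rho d q j (m * (k : ℕ)) = if (q j : ℤ) ∣ m then (q j : ℂ) else 0 := by
  have hpow (k : ℕ) : rho d q j (m * k) = rho d q j m ^ k := by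
    rw [rho, rho, ← exp_nat_mul]
    push_cast
    ring_nf
  simp only [hpow, Fin.sum_univ_eq_sum_range (fun k ↦ rho d q j m ^ k), ← rho_eq_one_iff]
  split_ifs with h
  · simp [h]
  · rw [geom_sum_eq h, rho_pow, sub_self, zero_div]

variable [∀ j, NeZero (q j)]

theorem dft_const (c : ℝ) (l : Fin d → ℤ) :
    dft d q (fun _ ↦ c) l = if ∀ j, (q j : ℤ) ∣ l j then (c : ℂ) else 0 := by
  have hq : ∏ j, (q j : ℂ) ≠ 0 := Finset.prod_ne_zero_iff.2 fun j _ ↦ NeZero.ne _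
  have hsum : ∑ n : Cell d q, ∏ j, rho d q j (-(l j * (n j : ℕ)))
      = ∏ j, if (q j : ℤ) ∣ l j then (q j : ℂ) else 0 := by
    simp only [← neg_mul]
    rw [← Fintype.prod_sum fun j (k : Fin (q j)) ↦ rho d q j (-l j * (k : ℕ))]
    simp only [sum_rho_mul, dvd_neg]
  rw [dft_eq_sum_prod_rho, ← Finset.mul_sum, hsum, Finset.prod_ite_zero]
  simp only [Finset.mem_univ, true_imp_iff]
  split_ifs
  · field_simp
  · simp

theorem potentialMatrix_const (c : ℝ) :
    potentialMatrix q (fun _ ↦ c) = (c : ℂ) • (1 : Matrix (Cell d q) (Cell d q) ℂ) := by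
  ext n m
  have hiff : (∀ j, (q j : ℤ) ∣ (n j : ℕ) - (m j : ℕ)) ↔ n = m := by
    rw [funext_iff]
    refine forall_congr' fun j ↦ ?_
    rw [← Int.modEq_iff_dvd, Int.natCast_modEq_iff, Nat.ModEq, Nat.mod_eq_of_lt (m j).2,
      Nat.mod_eq_of_lt (n j).2, eq_comm, Fin.ext_iff]
  simp [potentialMatrix, dft_const, hiff, Matrix.one_apply]

theorem floquetMatrix_add_const (c : ℝ) (z : Fin d → ℂ) :
    floquetMatrix d q (fun n ↦ V n + c) z
      = floquetMatrix d q V z + (c : ℂ) • (1 : Matrix (Cell d q) (Cell d q) ℂ) := by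
  rw [floquetMatrix_eq_diagonal_add, floquetMatrix_eq_diagonal_add, potentialMatrix_add,
    potentialMatrix_const, add_assoc]

theorem add_mem_spectrum_floquetMatrix_add_const_iff {c : ℝ} {z : Fin d → ℂ} {μ : ℂ} :
    μ + c ∈ spectrum ℂ (floquetMatrix d q (fun n ↦ V n + c) z)
      ↔ μ ∈ spectrum ℂ (floquetMatrix d q V z) := by
  rw [floquetMatrix_add_const, add_mem_spectrum_add_smul_one_iff]

end Fourier

/-! ### A second block of dimension at least two -/

section Escape

variable {d : ℕ} {q : Fin d → ℕ} {V : (Fin d → ℤ) → ℝ} {x y : Fin d → ℂ} {t μ : ℂ}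

/-- The point `u⁻¹ x + t y` with `p = (u, t)`. As `u → 0` it escapes to infinity in the
direction `x`, with bounded transversal parameter `t`. -/
def escapingPoint (x y : Fin d → ℂ) (p : ℂ × ℂ) : Fin d → ℂ :=
  p.1⁻¹ • (x + (p.1 * p.2) • y)

/-- The part of the Floquet matrix at `escapingPoint x y p` that stays bounded as `p.1 → 0`. -/
def escapingBoundedPart (q : Fin d → ℕ) (V : (Fin d → ℤ) → ℝ) (x y : Fin d → ℂ) (p : ℂ × ℂ) :
    Matrix (Cell d q) (Cell d q) ℂ :=
  Matrix.diagonal (p.2 • leadingSymbol q y) + boundedPart q V (x + (p.1 * p.2) • y) p.1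

theorem leadingSymbol_add_smul (c : ℂ) :
    leadingSymbol q (x + c • y) = leadingSymbol q x + c • leadingSymbol q y := by
  ext n
  simp [leadingSymbol, dotProduct_add]

theorem floquetMatrix_escapingPoint {p : ℂ × ℂ} (hp : p.1 ≠ 0) :
    floquetMatrix d q V (escapingPoint x y p)
      = p.1⁻¹ • Matrix.diagonal (leadingSymbol q x) + escapingBoundedPart q V x y p := by
  rw [escapingPoint, floquetMatrix_inv_smul, leadingSymbol_add_smul, ← Matrix.diagonal_smul,
    smul_add, mul_smul, inv_smul_smul₀ hp, escapingBoundedPart, ← add_assoc,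
    ← Matrix.diagonal_smul, Matrix.diagonal_add]
  rfl

theorem eventually_escapingPoint_ne_zero (hx : ∀ j, x j ≠ 0) (y : Fin d → ℂ) (t : ℂ) :
    ∀ᶠ p in 𝓝 ((0 : ℂ), t), p.1 ≠ 0 → ∀ j, escapingPoint x y p j ≠ 0 := by
  have hcont (j : Fin d) : Continuous fun p : ℂ × ℂ ↦ (x + (p.1 * p.2) • y) j := by
    simp only [Pi.add_apply, Pi.smul_apply]
    fun_prop
  filter_upwards [eventually_all.2 fun j ↦ (hcont j).continuousAt.eventually_ne
    (by simpa using hx j)] with p hp hu j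
  exact mul_ne_zero (inv_ne_zero hu) (hp j)

variable [∀ j, NeZero (q j)]

/-- For `p.1 ≠ 0` its zeros `p` are the parameters at which `μ` is an eigenvalue of the Floquet
matrix at `escapingPoint x y p`, and it remains analytic at `p.1 = 0`. -/
def escapingDet (q : Fin d → ℕ) [∀ j, NeZero (q j)] (V : (Fin d → ℤ) → ℝ) (x y : Fin d → ℂ)
    (μ : ℂ) (p : ℂ × ℂ) : ℂ :=
  rowScaledDet (leadingSymbol q x) 0 p.1
    (escapingBoundedPart q V x y p - μ • (1 : Matrix (Cell d q) (Cell d q) ℂ))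

theorem mem_spectrum_escapingPoint_iff (hx : leadingSymbol q x 0 = 0) {p : ℂ × ℂ}
    (hp : p.1 ≠ 0) :
    μ ∈ spectrum ℂ (floquetMatrix d q V (escapingPoint x y p)) ↔ escapingDet q V x y μ p = 0 := by
  rw [escapingDet, ← det_inv_smul_diagonal_add_eq_zero_iff hx hp,
    mem_spectrum_iff_det_sub_smul_one_eq_zero, floquetMatrix_escapingPoint hp, add_sub_assoc]

theorem escapingDet_zero (hx : leadingSymbol q x 0 = 0) :
    escapingDet q V x y μ (0, t) = (∏ n, Function.update (leadingSymbol q x) 0 1 n)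
      * (t * leadingSymbol q y 0 + potentialAvg d q V - μ) := by
  have hdft : (dft d q V fun _ ↦ 0) = potentialAvg d q V := dft_zero
  simp [escapingDet, rowScaledDet_zero hx, escapingBoundedPart, boundedPart, potentialMatrix, hdft]

theorem analyticAt_escapingDet (hx : ∀ j, x j ≠ 0) :
    AnalyticAt ℂ (escapingDet q V x y μ) (0, t) := by
  have hpoint : AnalyticAt ℂ (fun p : ℂ × ℂ ↦ x + (p.1 * p.2) • y) (0, t) := by
    fun_prop
  have hentry (n m : Cell d q) : AnalyticAt ℂ (fun p ↦ (escapingBoundedPart q V x y p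
      - μ • (1 : Matrix (Cell d q) (Cell d q) ℂ)) n m) (0, t) := by
    have hbounded := analyticAt_boundedPart (V := V) (q := q) hpoint (by simpa using hx)
      analyticAt_fst n m
    have hdiag : AnalyticAt ℂ (fun p : ℂ × ℂ ↦
        Matrix.diagonal (p.2 • leadingSymbol q y) n m) (0, t) := by
      simp only [Matrix.diagonal_apply, Pi.smul_apply, smul_eq_mul]
      split_ifs
      exacts [analyticAt_snd.mul analyticAt_const, analyticAt_const]
    exact (hdiag.add hbounded).sub analyticAt_const
  refine analyticAt_matrix_det fun n m ↦ ?_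
  have hscale : AnalyticAt ℂ
      (fun p : ℂ × ℂ ↦ Function.update (fun _ ↦ p.1) (0 : Cell d q) 1 n) (0, t) := by
    simp only [Function.update_apply]
    split_ifs
    exacts [analyticAt_const, analyticAt_fst]
  simp only [Matrix.add_apply, Matrix.diagonal_mul]
  exact analyticAt_const.add (hscale.mul (hentry n m))

theorem prod_update_leadingSymbol_ne_zero (hx : ∀ n, leadingSymbol q x n = 0 ↔ n = 0) :
    ∏ n, Function.update (leadingSymbol q x) 0 1 n ≠ 0 := by
  refine Finset.prod_ne_zero_iff.2 fun n _ ↦ ?_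
  rcases eq_or_ne n 0 with rfl | hn
  · simp
  · simpa [hn] using (hx n).not.2 hn

theorem exists_tendsto_mem_spectrum_escapingPoint (hx : ∀ j, x j ≠ 0)
    (hx0 : ∀ n, leadingSymbol q x n = 0 ↔ n = 0) (hy : leadingSymbol q y 0 = 1) :
    ∃ φ : ℂ → ℂ, Tendsto φ (𝓝[≠] 0) (𝓝 t) ∧ ∀ᶠ u in 𝓝[≠] 0, t + potentialAvg d q V ∈
      spectrum ℂ (floquetMatrix d q V (escapingPoint x y (u, φ u))) := by
  have hzero := (hx0 0).2 rfl
  have hderiv : deriv (fun s ↦ escapingDet q V x y (t + potentialAvg d q V) (0, s)) t ≠ 0 := by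
    simpa [escapingDet_zero hzero, hy] using prod_update_leadingSymbol_ne_zero hx0
  obtain ⟨φ, hφ, hroot⟩ := exists_tendsto_root_of_deriv_ne_zero
    (analyticAt_escapingDet (V := V) hx).contDiffAt (by simp [escapingDet_zero hzero, hy]) hderiv
  refine ⟨φ, hφ.mono_left nhdsWithin_le_nhds, ?_⟩
  filter_upwards [nhdsWithin_le_nhds hroot, self_mem_nhdsWithin] with u hdet hu
  exact (mem_spectrum_escapingPoint_iff (p := (u, φ u)) hzero hu).2 hdet

theorem eventually_notMem_spectrum_escapingPoint (hx : ∀ j, x j ≠ 0)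
    (hx0 : ∀ n, leadingSymbol q x n = 0 ↔ n = 0) (hy : leadingSymbol q y 0 = 1)
    (hμ : μ ≠ t + potentialAvg d q V) :
    ∀ᶠ p in 𝓝 ((0 : ℂ), t), p.1 ≠ 0 →
      μ ∉ spectrum ℂ (floquetMatrix d q V (escapingPoint x y p)) := by
  have hzero := (hx0 0).2 rfl
  have hne : escapingDet q V x y μ (0, t) ≠ 0 := by
    rw [escapingDet_zero hzero, hy, mul_one]
    exact mul_ne_zero (prod_update_leadingSymbol_ne_zero hx0) (sub_ne_zero.2 hμ.symm)
  filter_upwards [(analyticAt_escapingDet hx).continuousAt.eventually_ne hne] with p hp hu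
  rwa [mem_spectrum_escapingPoint_iff hzero hu]

end Escape

section Linked

variable {d₁ d₂ : ℕ} {q₁ : Fin d₁ → ℕ} {q₂ : Fin d₂ → ℕ} {V₁ Y₁ : (Fin d₁ → ℤ) → ℝ}
  {V₂ Y₂ : (Fin d₂ → ℤ) → ℝ} {lam0 : ℂ}

/-- The inclusion of the Fermi variety at level `lam0` of `V₁ ⊕ V₂` in that of `Y₁ ⊕ Y₂`, in terms
of the spectra of the blocks: `lam0` lies in the spectrum of a direct sum iff it is a sum of an
eigenvalue of each block. -/
def FermiLinked (q₁ : Fin d₁ → ℕ) (q₂ : Fin d₂ → ℕ) (V₁ Y₁ : (Fin d₁ → ℤ) → ℝ)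
    (V₂ Y₂ : (Fin d₂ → ℤ) → ℝ) (lam0 : ℂ) : Prop :=
  ∀ z w, (∀ j, z j ≠ 0) → (∀ j, w j ≠ 0) → ∀ a ∈ spectrum ℂ (floquetMatrix d₁ q₁ V₁ z),
    lam0 - a ∈ spectrum ℂ (floquetMatrix d₂ q₂ V₂ w) →
      ∃ a' ∈ spectrum ℂ (floquetMatrix d₁ q₁ Y₁ z),
        lam0 - a' ∈ spectrum ℂ (floquetMatrix d₂ q₂ Y₂ w)

theorem FermiLinked.symm (h : FermiLinked q₁ q₂ V₁ Y₁ V₂ Y₂ lam0) :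
    FermiLinked q₂ q₁ V₂ Y₂ V₁ Y₁ lam0 := by
  intro w z hw hz b hb hab
  obtain ⟨a', ha', hb'⟩ := h z w hz hw (lam0 - b) hab (by simpa using hb)
  exact ⟨lam0 - a', hb', by simpa using ha'⟩

variable [∀ j, NeZero (q₁ j)] [∀ j, NeZero (q₂ j)]

/- Let the second block escape to infinity while one of its eigenvalues stays equal to
`lam0 - a`. The only eigenvalue near it for `Y₂` differs by `[V₂] - [Y₂]`, so the eigenvalue of
`Y₁` linked to `a` must be `a + ([V₂] - [Y₂])`. -/
theorem FermiLinked.spectrum_add_const_subset (hd₂ : 2 ≤ d₂)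
    (hco : Pairwise fun i j ↦ (q₂ i).Coprime (q₂ j)) (h : FermiLinked q₁ q₂ V₁ Y₁ V₂ Y₂ lam0)
    {z : Fin d₁ → ℂ} (hz : ∀ j, z j ≠ 0) :
    spectrum ℂ (floquetMatrix d₁ q₁
        (fun m ↦ V₁ m + (potentialAvg d₂ q₂ V₂ - potentialAvg d₂ q₂ Y₂)) z)
      ⊆ spectrum ℂ (floquetMatrix d₁ q₁ Y₁ z) := by
  intro μ hμ
  obtain ⟨a, rfl⟩ : ∃ a, a + ((potentialAvg d₂ q₂ V₂ - potentialAvg d₂ q₂ Y₂ : ℝ) : ℂ) = μ :=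
    ⟨_, sub_add_cancel _ _⟩
  rw [add_mem_spectrum_floquetMatrix_add_const_iff] at hμ
  obtain ⟨x, hx, hx0⟩ := exists_direction_leadingSymbol_eq_zero_iff (q := q₂) hd₂ hco
  let y : Fin d₂ → ℂ := Pi.single ⟨0, by omega⟩ 1
  have hy : leadingSymbol q₂ y 0 = 1 := by simp [leadingSymbol, y, rho_zero]
  set t : ℂ := lam0 - a - potentialAvg d₂ q₂ V₂ with ht
  by_contra hnot
  have hunlinked : ∀ᶠ p in 𝓝 ((0 : ℂ), t), ∀ a' ∈ spectrum ℂ (floquetMatrix d₁ q₁ Y₁ z),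
      p.1 ≠ 0 → lam0 - a' ∉ spectrum ℂ (floquetMatrix d₂ q₂ Y₂ (escapingPoint x y p)) := by
    refine ((Matrix.finite_spectrum _).eventually_all).2 fun a' ha' ↦
      eventually_notMem_spectrum_escapingPoint hx hx0 hy fun heq ↦ hnot ?_
    have : a + ((potentialAvg d₂ q₂ V₂ - potentialAvg d₂ q₂ Y₂ : ℝ) : ℂ) = a' := by
      push_cast
      linear_combination heq + ht
    rwa [this]
  obtain ⟨φ, hφ, hmem⟩ := exists_tendsto_mem_spectrum_escapingPoint (V := V₂) (t := t) hx hx0 hy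
  have hpath : Tendsto (fun u ↦ (u, φ u)) (𝓝[≠] 0) (𝓝 (0, t)) :=
    (tendsto_nhdsWithin_of_tendsto_nhds tendsto_id).prodMk_nhds hφ
  obtain ⟨u, hu, hb, hfar, hne⟩ := (eventually_mem_nhdsWithin.and (hmem.and
    (hpath.eventually (hunlinked.and (eventually_escapingPoint_ne_zero hx y t))))).exists
  obtain ⟨a', ha', hb'⟩ := h z _ hz (hne hu) a hμ (by simpa [ht] using hb)
  exact hfar a' ha' hu hb'

theorem FermiLinked.floquetIsospectral_add_const [NeZero d₁] (hd₂ : 2 ≤ d₂)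
    (hco : Pairwise fun i j ↦ (q₂ i).Coprime (q₂ j)) (h : FermiLinked q₁ q₂ V₁ Y₁ V₂ Y₂ lam0) :
    FloquetIsospectral d₁ q₁
      (fun m ↦ V₁ m + (potentialAvg d₂ q₂ V₂ - potentialAvg d₂ q₂ Y₂)) Y₁ := by
  obtain ⟨x, hx, -, hinj⟩ := exists_generic_direction (q := q₁) fun j ↦ Nat.coprime_one_left (q₁ j)
  refine floquetIsospectral_of_eventually_spectrum_subset hx
    (fun m n hmn ↦ (hinj m n 1 (one_pow _) (by rw [hmn, one_mul])).1) ?_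
  have hnear : ∀ᶠ p : ℂ × (Fin d₁ → ℂ) in 𝓝 (0, x), ∀ j, p.2 j ≠ 0 :=
    eventually_all.2 fun j ↦
      ((continuous_apply j).comp continuous_snd).continuousAt.eventually_ne (hx j)
  filter_upwards [hnear] with p hp hu
  exact h.spectrum_add_const_subset hd₂ hco fun j ↦ mul_ne_zero (inv_ne_zero hu) (hp j)

end Linked

/-! ### A second block of dimension one -/

section OneDimensional

variable {q : Fin 1 → ℕ} {V : (Fin 1 → ℤ) → ℝ} {β : ℂ}

theorem leadingSymbol_fin_one (q : Fin 1 → ℕ) (β : ℂ) (n : Cell 1 q) :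
    leadingSymbol q (fun _ ↦ β) n = rho 1 q 0 (n 0 : ℕ) * β := by
  simp [leadingSymbol, dotProduct]

variable [∀ j, NeZero (q j)]

theorem leadingSymbol_fin_one_zero (β : ℂ) : leadingSymbol q (fun _ ↦ β) 0 = β := by
  simp [leadingSymbol_fin_one, rho_zero]

theorem leadingSymbol_fin_one_injective (hβ : β ≠ 0) :
    Function.Injective (leadingSymbol q fun _ ↦ β) := by
  intro n m h
  simp only [leadingSymbol_fin_one, mul_left_inj' hβ] at h
  exact funext fun j ↦ Subsingleton.elim 0 j ▸ rho_injective h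

theorem deriv_prod_leadingSymbol_sub_ne_zero (hβ : β ≠ 0) :
    deriv (fun w ↦ ∏ n : Cell 1 q, (leadingSymbol q (fun _ ↦ w) n - β)) β ≠ 0 := by
  have hdiff (n : Cell 1 q) : DifferentiableAt ℂ (fun w ↦ leadingSymbol q (fun _ ↦ w) n - β) β := by
    simp only [leadingSymbol_fin_one]
    fun_prop
  have hother : ∀ n ∈ Finset.univ.erase (0 : Cell 1 q), leadingSymbol q (fun _ ↦ β) n - β ≠ 0 := by
    intro n hn h
    exact Finset.ne_of_mem_erase hn (leadingSymbol_fin_one_injective hβ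
      ((sub_eq_zero.1 h).trans (leadingSymbol_fin_one_zero β).symm))
  simp only [← Finset.mul_prod_erase _ _ (Finset.mem_univ (0 : Cell 1 q)),
    leadingSymbol_fin_one_zero]
  rw [deriv_fun_mul (by fun_prop) (DifferentiableAt.fun_finsetProd fun n _ ↦ hdiff n)]
  simpa [Finset.prod_eq_zero_iff] using hother

theorem exists_tendsto_eventually_mem_spectrum {X : Type*} {l : Filter X} {u μ : X → ℂ}
    (hu : Tendsto u l (𝓝[≠] 0)) (hμ : Tendsto (fun p ↦ u p * μ p) l (𝓝 β)) (hβ : β ≠ 0) :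
    ∃ w : X → Fin 1 → ℂ, Tendsto w l (𝓝 fun _ ↦ β) ∧
      ∀ᶠ p in l, μ p ∈ spectrum ℂ (floquetMatrix 1 q V ((u p)⁻¹ • w p)) := by
  let g : (ℂ × ℂ) × ℂ → ℂ := fun y ↦ (scaledFloquetMatrix q V (fun _ ↦ y.2) y.1.1
    - y.1.2 • (1 : Matrix (Cell 1 q) (Cell 1 q) ℂ)).det
  have hg : AnalyticAt ℂ g ((0, β), β) := by
    have hpoint : AnalyticAt ℂ (fun y : (ℂ × ℂ) × ℂ ↦ fun _ : Fin 1 ↦ y.2) ((0, β), β) :=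
      analyticAt_pi_iff.2 fun _ ↦ analyticAt_snd
    exact analyticAt_matrix_det fun n m ↦
      (analyticAt_scaledFloquetMatrix hpoint (fun _ ↦ hβ) (analyticAt_fst.comp analyticAt_fst)
        n m).sub ((analyticAt_snd.comp analyticAt_fst).mul analyticAt_const)
  have hg0 (w : ℂ) : g ((0, β), w) = ∏ n : Cell 1 q, (leadingSymbol q (fun _ ↦ w) n - β) := by
    simp only [g, scaledFloquetMatrix, zero_smul, add_zero, Matrix.smul_one_eq_diagonal,
      Matrix.diagonal_sub, Matrix.det_diagonal]
  obtain ⟨φ, hφ, hroot⟩ := exists_tendsto_root_of_deriv_ne_zero hg.contDiffAt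
    (by rw [hg0]; exact Finset.prod_eq_zero (Finset.mem_univ 0)
          (sub_eq_zero.2 (leadingSymbol_fin_one_zero β)))
    (by simpa only [hg0] using deriv_prod_leadingSymbol_sub_ne_zero hβ)
  have hparam := (tendsto_nhds_of_tendsto_nhdsWithin hu).prodMk_nhds hμ
  refine ⟨fun p _ ↦ φ (u p, u p * μ p), tendsto_pi_nhds.2 fun _ ↦ hφ.comp hparam, ?_⟩
  filter_upwards [hparam.eventually hroot, hu.eventually_mem self_mem_nhdsWithin] with p hp hu
  exact (mul_mem_spectrum_scaledFloquetMatrix_iff hu).1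
    (mem_spectrum_iff_det_sub_smul_one_eq_zero.2 hp)

end OneDimensional

theorem eventually_forall_of_forall_ultrafilter {X Y : Type*} {f : Filter X} {r : X → Y → Prop}
    (h : ∀ l : Ultrafilter X, ↑l ≤ f → ∀ a : X → Y, ∀ᶠ p in l, r p (a p)) :
    ∀ᶠ p in f, ∀ y, r p y := by
  refine mem_iff_ultrafilter.2 fun l hl ↦ ?_
  by_contra hnot
  have hex : ∀ᶠ p in l, ∃ y, ¬r p y := by
    filter_upwards [Ultrafilter.compl_mem_iff_notMem.2 hnot] with p hp
    simpa using hp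
  obtain ⟨a, ha⟩ := hex.choice
  obtain ⟨p, hp, hp'⟩ := (ha.and (h l hl a)).exists
  exact hp hp'

section Shift

variable {d₁ d₂ : ℕ} {q₁ : Fin d₁ → ℕ} {q₂ : Fin d₂ → ℕ} {V₁ Y₁ : (Fin d₁ → ℤ) → ℝ}
  {V₂ Y₂ : (Fin d₂ → ℤ) → ℝ} {lam0 : ℂ} [∀ j, NeZero (q₁ j)] [∀ j, NeZero (q₂ j)]

theorem FermiLinked.add_neg_const {C : ℝ}
    (hiso : FloquetIsospectral d₂ q₂ (fun m ↦ V₂ m + C) Y₂)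
    (h : FermiLinked q₁ q₂ V₁ Y₁ V₂ Y₂ lam0) :
    FermiLinked q₁ q₂ (fun m ↦ V₁ m + -C) Y₁ V₂ V₂ (lam0 - C) := by
  intro z w hz hw a ha hb
  rw [← sub_add_cancel a ((-C : ℝ) : ℂ), add_mem_spectrum_floquetMatrix_add_const_iff] at ha
  obtain ⟨a', ha', hb'⟩ := h z w hz hw _ ha (by convert hb using 1; push_cast; ring)
  rw [← mem_spectrum_floquetMatrix_iff_of_floquetIsospectral hiso hw,
    ← sub_add_cancel (lam0 - a') (C : ℂ), add_mem_spectrum_floquetMatrix_add_const_iff] at hb'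
  exact ⟨a', ha', by rwa [sub_right_comm]⟩

end Shift

section LinkedOneDimensional

variable {d₁ : ℕ} {q₁ : Fin d₁ → ℕ} {q₂ : Fin 1 → ℕ} {V₁ Y₁ : (Fin d₁ → ℤ) → ℝ}
  {V₂ : (Fin 1 → ℤ) → ℝ} {lam0 : ℂ} [∀ j, NeZero (q₂ j)]

/- If `u a' → α m` and `u (lam0 - a') → -ρ α n` with `ρ` a root of unity, then adding up gives
`α m = ρ α n`, and genericity of `x` forces `m = n` and `ρ = 1`. -/
theorem tendsto_mul_sub_of_generic {x : Fin d₁ → ℂ} (hx : ∀ j, x j ≠ 0)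
    (hx0 : ∀ n, leadingSymbol q₁ x n ≠ 0)
    (hgen : ∀ m n (ζ : ℂ), ζ ^ q₂ 0 = 1 →
      leadingSymbol q₁ x m = ζ * leadingSymbol q₁ x n → m = n ∧ ζ = 1)
    {X : Type*} {l : Ultrafilter X} {u a' : X → ℂ} {z : X → Fin d₁ → ℂ} {w : X → Fin 1 → ℂ}
    (hu : Tendsto u l (𝓝[≠] 0)) (hz : Tendsto z l (𝓝 x)) {n : Cell d₁ q₁}
    (hw : Tendsto w l (𝓝 fun _ ↦ -leadingSymbol q₁ x n))
    (ha' : ∀ᶠ p in l, a' p ∈ spectrum ℂ (floquetMatrix d₁ q₁ Y₁ ((u p)⁻¹ • z p)))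
    (hb : ∀ᶠ p in l, lam0 - a' p ∈ spectrum ℂ (floquetMatrix 1 q₂ V₂ ((u p)⁻¹ • w p))) :
    Tendsto (fun p ↦ u p * (lam0 - a' p)) l (𝓝 (-leadingSymbol q₁ x n)) := by
  have hn : -leadingSymbol q₁ x n ≠ 0 := neg_ne_zero.2 (hx0 n)
  obtain ⟨m, hm⟩ := exists_tendsto_mul_eigenvalue
    (fun m n hmn ↦ (hgen m n 1 (one_pow _) (by rw [hmn, one_mul])).1) hx hu hz ha'
  obtain ⟨k, hk⟩ := exists_tendsto_mul_eigenvalue (leadingSymbol_fin_one_injective hn)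
    (fun _ ↦ hn) hu hw hb
  rw [leadingSymbol_fin_one] at hk
  have hsum : Tendsto (fun p ↦ u p * a' p + u p * (lam0 - a' p)) l (𝓝 0) := by
    convert (tendsto_nhds_of_tendsto_nhdsWithin hu).mul_const lam0 using 2 <;> ring
  have hbalance := tendsto_nhds_unique (hm.add hk) hsum
  rwa [(hgen m n _ rho_pow (by linear_combination hbalance)).2, one_mul] at hk

/- Both blocks escape to infinity: `a` grows like `u⁻¹ α n`, and the second block is placed so that
`lam0 - a` is one of its eigenvalues. The eigenvalue `a'` linked to `a` has the same leading term,
so `lam0 - a` and `lam0 - a'` are asymptotically equal simple eigenvalues of the same matrix. -/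
theorem eventually_mem_spectrum_of_generic {x : Fin d₁ → ℂ} (hx : ∀ j, x j ≠ 0)
    (hx0 : ∀ n, leadingSymbol q₁ x n ≠ 0)
    (hgen : ∀ m n (ζ : ℂ), ζ ^ q₂ 0 = 1 →
      leadingSymbol q₁ x m = ζ * leadingSymbol q₁ x n → m = n ∧ ζ = 1)
    (h : FermiLinked q₁ q₂ V₁ Y₁ V₂ V₂ lam0)
    {X : Type*} {l : Ultrafilter X} {u a : X → ℂ} {z : X → Fin d₁ → ℂ}
    (hu : Tendsto u l (𝓝[≠] 0)) (hz : Tendsto z l (𝓝 x))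
    (ha : ∀ᶠ p in l, a p ∈ spectrum ℂ (floquetMatrix d₁ q₁ V₁ ((u p)⁻¹ • z p))) :
    ∀ᶠ p in l, a p ∈ spectrum ℂ (floquetMatrix d₁ q₁ Y₁ ((u p)⁻¹ • z p)) := by
  obtain ⟨n, hn⟩ := exists_tendsto_mul_eigenvalue
    (fun m n hmn ↦ (hgen m n 1 (one_pow _) (by rw [hmn, one_mul])).1) hx hu hz ha
  have hn0 : -leadingSymbol q₁ x n ≠ 0 := neg_ne_zero.2 (hx0 n)
  have hβ : Tendsto (fun p ↦ u p * (lam0 - a p)) l (𝓝 (-leadingSymbol q₁ x n)) := by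
    simpa [mul_sub] using ((tendsto_nhds_of_tendsto_nhdsWithin hu).mul_const lam0).sub hn
  obtain ⟨w, hw, hb⟩ := exists_tendsto_eventually_mem_spectrum (q := q₂) (V := V₂) hu hβ hn0
  have hlinked : ∀ᶠ p in l, ∃ a', a' ∈ spectrum ℂ (floquetMatrix d₁ q₁ Y₁ ((u p)⁻¹ • z p)) ∧
      lam0 - a' ∈ spectrum ℂ (floquetMatrix 1 q₂ V₂ ((u p)⁻¹ • w p)) := by
    filter_upwards [ha, hb, hu.eventually_mem self_mem_nhdsWithin,
      eventually_all.2 fun j ↦ (tendsto_pi_nhds.1 hz j).eventually_ne (hx j),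
      eventually_all.2 fun j ↦ (tendsto_pi_nhds.1 hw j).eventually_ne hn0] with p ha hb hu hz hw
    exact h _ _ (fun j ↦ mul_ne_zero (inv_ne_zero hu) (hz j))
      (fun j ↦ mul_ne_zero (inv_ne_zero hu) (hw j)) _ ha hb
  obtain ⟨a', ha'⟩ := hlinked.choice
  have hβ' := tendsto_mul_sub_of_generic hx hx0 hgen hu hz hw (ha'.mono fun _ h ↦ h.1)
    (ha'.mono fun _ h ↦ h.2)
  rw [← leadingSymbol_fin_one_zero (q := q₂) (-leadingSymbol q₁ x n)] at hβ hβ'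
  filter_upwards [ha', eventuallyEq_of_tendsto_mul_eigenvalue
    (leadingSymbol_fin_one_injective hn0) (fun _ ↦ hn0) hu hw hb hβ (ha'.mono fun _ h ↦ h.2) hβ']
    with p ⟨hmem, _⟩ heq
  rwa [sub_right_inj.1 heq]

theorem FermiLinked.floquetIsospectral_of_fin_one [NeZero d₁] [∀ j, NeZero (q₁ j)]
    (hco : ∀ j, (q₂ 0).Coprime (q₁ j)) (h : FermiLinked q₁ q₂ V₁ Y₁ V₂ V₂ lam0) :
    FloquetIsospectral d₁ q₁ V₁ Y₁ := by
  obtain ⟨x, hx, hx0, hgen⟩ := exists_generic_direction hco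
  refine floquetIsospectral_of_eventually_spectrum_subset hx
    (fun m n hmn ↦ (hgen m n 1 (one_pow _) (by rw [hmn, one_mul])).1) ?_
  refine eventually_inf_principal.1 (eventually_forall_of_forall_ultrafilter fun l hl a ↦
    Ultrafilter.eventually_imp.2 ?_)
  have hl' : Tendsto id ↑l (𝓝 ((0 : ℂ), x)) := hl.trans inf_le_left
  exact eventually_mem_spectrum_of_generic hx hx0 hgen h (tendsto_nhdsWithin_iff.2
    ⟨hl'.fst_nhds, le_principal_iff.1 (hl.trans inf_le_right)⟩) hl'.snd_nhds

end LinkedOneDimensional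

/-! ### Splitting the coordinates -/

theorem spectrum_submatrix_equiv {N N' K : Type*} [Fintype N] [DecidableEq N] [Fintype N']
    [DecidableEq N'] [Field K] (σ : N ≃ N') (A : Matrix N' N' K) :
    spectrum K (A.submatrix σ σ) = spectrum K A :=
  AlgEquiv.spectrum_eq (Matrix.reindexAlgEquiv K K σ.symm) A

theorem diagonal_fst_add_snd {N N' R : Type*} [DecidableEq N] [DecidableEq N']
    [NonAssocSemiring R] (f : N → R) (g : N' → R) :
    Matrix.diagonal (fun n : N × N' ↦ f n.1 + g n.2)
      = Matrix.diagonal f ⊗ₖ 1 + 1 ⊗ₖ Matrix.diagonal g := by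
  rw [← Matrix.diagonal_one, ← Matrix.diagonal_one, Matrix.diagonal_kronecker_diagonal,
    Matrix.diagonal_kronecker_diagonal, Matrix.diagonal_add]
  simp only [mul_one, one_mul]

section Splitting

variable {d d₁ d₂ : ℕ} (e : Fin d₁ ⊕ Fin d₂ ≃ Fin d) {q : Fin d → ℕ}
  {V : (Fin d → ℤ) → ℝ} {V₁ : (Fin d₁ → ℤ) → ℝ} {V₂ : (Fin d₂ → ℤ) → ℝ}

/-- The decomposition of a periodicity cell induced by the splitting `e` of the coordinates into
two groups. -/
def cellEquivProd (q : Fin d → ℕ) :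
    Cell d q ≃ Cell d₁ (fun i ↦ q (e (.inl i))) × Cell d₂ (fun i ↦ q (e (.inr i))) :=
  (Equiv.piCongrLeft (fun j ↦ Fin (q j)) e).symm.trans (Equiv.sumPiEquivProdPi _)

theorem cellEquivProd_apply (n : Cell d q) :
    cellEquivProd e q n = (fun i ↦ n (e (.inl i)), fun i ↦ n (e (.inr i))) :=
  rfl

variable {e} in
theorem dft_mul (hV : ∀ n, V n = V₁ (fun i ↦ n (e (.inl i))) * V₂ (fun i ↦ n (e (.inr i))))
    (l : Fin d → ℤ) :
    dft d q V l = dft d₁ (fun i ↦ q (e (.inl i))) V₁ (fun i ↦ l (e (.inl i)))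
      * dft d₂ (fun i ↦ q (e (.inr i))) V₂ (fun i ↦ l (e (.inr i))) := by
  have hprod (f : Fin d → ℂ) : ∏ j, f j = (∏ i, f (e (.inl i))) * ∏ i, f (e (.inr i)) := by
    rw [← e.prod_comp, Fintype.prod_sum_type]
  simp only [dft_eq_sum_prod_rho, hprod, hV]
  rw [mul_inv, mul_mul_mul_comm, Fintype.sum_mul_sum, ← Fintype.sum_prod_type',
    ← (cellEquivProd e q).sum_comp]
  simp only [cellEquivProd_apply, ofReal_mul]
  congr 1
  exact Finset.sum_congr rfl fun n _ ↦ mul_mul_mul_comm _ _ _ _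

variable {e} in
theorem potentialMatrix_mul
    (hV : ∀ n, V n = V₁ (fun i ↦ n (e (.inl i))) * V₂ (fun i ↦ n (e (.inr i)))) :
    potentialMatrix q V = (potentialMatrix (fun i ↦ q (e (.inl i))) V₁
      ⊗ₖ potentialMatrix (fun i ↦ q (e (.inr i))) V₂).submatrix
        (cellEquivProd e q) (cellEquivProd e q) := by
  ext n m
  exact dft_mul hV _

variable [∀ j, NeZero (q j)]

variable {e} in
theorem potentialMatrix_sum
    (hV : ∀ n, V n = V₁ (fun i ↦ n (e (.inl i))) + V₂ (fun i ↦ n (e (.inr i)))) :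
    potentialMatrix q V = (potentialMatrix (fun i ↦ q (e (.inl i))) V₁ ⊗ₖ 1
      + 1 ⊗ₖ potentialMatrix (fun i ↦ q (e (.inr i))) V₂).submatrix
        (cellEquivProd e q) (cellEquivProd e q) := by
  have hone {d : ℕ} {q : Fin d → ℕ} [∀ j, NeZero (q j)] :
      (1 : Matrix (Cell d q) (Cell d q) ℂ) = potentialMatrix q fun _ ↦ 1 := by
    simp [potentialMatrix_const]
  rw [funext hV, potentialMatrix_add, hone, hone, Matrix.submatrix_add]
  exact congrArg₂ (· + ·) (potentialMatrix_mul fun n ↦ (mul_one _).symm)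
    (potentialMatrix_mul fun n ↦ (one_mul _).symm)

variable {e} in
theorem floquetMatrix_sum
    (hV : ∀ n, V n = V₁ (fun i ↦ n (e (.inl i))) + V₂ (fun i ↦ n (e (.inr i))))
    (z : Fin d → ℂ) :
    floquetMatrix d q V z
      = (floquetMatrix d₁ (fun i ↦ q (e (.inl i))) V₁ (fun i ↦ z (e (.inl i))) ⊗ₖ 1
        + 1 ⊗ₖ floquetMatrix d₂ (fun i ↦ q (e (.inr i))) V₂ (fun i ↦ z (e (.inr i)))).submatrix
          (cellEquivProd e q) (cellEquivProd e q) := by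
  simp only [floquetMatrix_eq_diagonal_add, Matrix.add_kronecker, Matrix.kronecker_add]
  rw [potentialMatrix_sum hV, add_add_add_comm, ← diagonal_fst_add_snd,
    Matrix.submatrix_add (Matrix.diagonal _), Pi.add_apply, Pi.add_apply,
    Matrix.submatrix_diagonal_equiv]
  congr 2
  ext n
  rw [← e.sum_comp, Fintype.sum_sum_type]
  rfl

variable {e} in
theorem spectrum_floquetMatrix_sum
    (hV : ∀ n, V n = V₁ (fun i ↦ n (e (.inl i))) + V₂ (fun i ↦ n (e (.inr i))))
    (z : Fin d → ℂ) :
    spectrum ℂ (floquetMatrix d q V z)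
      = spectrum ℂ (floquetMatrix d₁ (fun i ↦ q (e (.inl i))) V₁ fun i ↦ z (e (.inl i)))
        + spectrum ℂ (floquetMatrix d₂ (fun i ↦ q (e (.inr i))) V₂ fun i ↦ z (e (.inr i))) := by
  rw [floquetMatrix_sum hV, spectrum_submatrix_equiv, spectrum_kroneckerSum]

variable {e} {Y : (Fin d → ℤ) → ℝ} {Y₁ : (Fin d₁ → ℤ) → ℝ} {Y₂ : (Fin d₂ → ℤ) → ℝ} {lam0 : ℂ}

theorem fermiLinked_of_forall_floquetDet_eq_zero
    (hV : ∀ n, V n = V₁ (fun i ↦ n (e (.inl i))) + V₂ (fun i ↦ n (e (.inr i))))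
    (hY : ∀ n, Y n = Y₁ (fun i ↦ n (e (.inl i))) + Y₂ (fun i ↦ n (e (.inr i))))
    (h : ∀ z, (∀ j, z j ≠ 0) → floquetDet d q V z lam0 = 0 → floquetDet d q Y z lam0 = 0) :
    FermiLinked (fun i ↦ q (e (.inl i))) (fun i ↦ q (e (.inr i))) V₁ Y₁ V₂ Y₂ lam0 := by
  intro z w hz hw a ha hb
  have hzw := h (Sum.elim z w ∘ e.symm) fun j ↦ by
    rcases hj : e.symm j with i | i
    exacts [by simpa [hj] using hz i, by simpa [hj] using hw i]
  simp only [floquetDet, ← mem_spectrum_iff_det_sub_smul_one_eq_zero,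
    spectrum_floquetMatrix_sum hV, spectrum_floquetMatrix_sum hY, Function.comp_apply,
    Equiv.symm_apply_apply, Sum.elim_inl, Sum.elim_inr] at hzw
  obtain ⟨a', ha', b', hb', hab⟩ := hzw ⟨a, ha, _, hb, add_sub_cancel _ _⟩
  exact ⟨a', ha', by rwa [← eq_sub_of_add_eq' hab]⟩

end Splitting

/-! ### Blocks of coordinates -/

section Blocks

variable {r d : ℕ} (D : Fin r → ℕ) (hsum : ∑ j, D j = d)

theorem blockEmbed_eq_finSigmaFinEquiv (j : Fin r) (i : Fin (D j)) :
    blockEmbed D hsum j i = Fin.cast hsum (finSigmaFinEquiv ⟨j, i⟩) := by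
  have hlt : Finset.univ.filter (· < j) = Finset.univ.map (Fin.castLEEmb j.2.le) := by
    ext k
    simp only [Finset.mem_filter, Finset.mem_univ, true_and, Finset.mem_map, Fin.castLEEmb_apply]
    exact ⟨fun h ↦ ⟨⟨k, h⟩, rfl⟩, fun ⟨l, hl⟩ ↦ hl ▸ l.2⟩
  ext
  simp only [blockEmbed, hlt, Finset.sum_map, Fin.val_cast, finSigmaFinEquiv_apply]
  rfl

theorem blockEmbed_eq_blockEmbed_iff {j k : Fin r} {i : Fin (D j)} {i' : Fin (D k)} :
    blockEmbed D hsum j i = blockEmbed D hsum k i' ↔ (⟨j, i⟩ : Σ j, Fin (D j)) = ⟨k, i'⟩ := by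
  simp only [blockEmbed_eq_finSigmaFinEquiv, Fin.cast_inj, EmbeddingLike.apply_eq_iff_eq]

theorem blockEmbed_injective (j : Fin r) : Function.Injective (blockEmbed D hsum j) :=
  fun _ _ h ↦ sigma_mk_injective (β := fun j ↦ Fin (D j))
    ((blockEmbed_eq_blockEmbed_iff D hsum).1 h)

theorem blockEmbed_notMem_range_of_ne {j k : Fin r} (hjk : j ≠ k) (i : Fin (D j)) :
    blockEmbed D hsum j i ∉ Set.range (blockEmbed D hsum k) := fun ⟨_, hi⟩ ↦
  hjk (congrArg Sigma.fst ((blockEmbed_eq_blockEmbed_iff D hsum).1 hi)).symm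

end Blocks

theorem exists_sumEquiv_apply_inl {m d : ℕ} {f : Fin m → Fin d} (hf : Function.Injective f) :
    ∃ (k : ℕ) (e : Fin m ⊕ Fin k ≃ Fin d), ∀ i, e (.inl i) = f i :=
  ⟨_, ((Equiv.ofInjective f hf).sumCongr (Finite.equivFin _).symm).trans
    (Equiv.Set.sumCompl (Set.range f)), fun _ ↦ rfl⟩

theorem sumElim_symm_apply_of_notMem_range {α β γ R : Type*} (e : α ⊕ β ≃ γ) (f : α → R)
    (n : γ → R) {c : γ} (hc : c ∉ Set.range (e ∘ Sum.inl)) :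
    Sum.elim f (n ∘ e ∘ Sum.inr) (e.symm c) = n c := by
  obtain ⟨a | b, rfl⟩ := e.surjective c
  · exact absurd ⟨a, rfl⟩ hc
  · simp

theorem FermiLinked.exists_floquetIsospectral_add_const {d₁ d₂ : ℕ} [NeZero d₁] [NeZero d₂]
    {q₁ : Fin d₁ → ℕ} {q₂ : Fin d₂ → ℕ} [∀ j, NeZero (q₁ j)] [∀ j, NeZero (q₂ j)]
    {V₁ Y₁ : (Fin d₁ → ℤ) → ℝ} {V₂ Y₂ : (Fin d₂ → ℤ) → ℝ} {lam0 : ℂ} (hd : 3 ≤ d₁ + d₂)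
    (hco₁ : Pairwise fun i j ↦ (q₁ i).Coprime (q₁ j))
    (hco₂ : Pairwise fun i j ↦ (q₂ i).Coprime (q₂ j)) (hco : ∀ i j, (q₂ i).Coprime (q₁ j))
    (h : FermiLinked q₁ q₂ V₁ Y₁ V₂ Y₂ lam0) :
    ∃ C : ℝ, FloquetIsospectral d₁ q₁ (fun m ↦ V₁ m + C) Y₁ := by
  by_cases hd₂ : 2 ≤ d₂
  · exact ⟨_, h.floquetIsospectral_add_const hd₂ hco₂⟩
  · obtain rfl : d₂ = 1 := by have := NeZero.pos d₂; omega
    have hiso := h.symm.floquetIsospectral_add_const (by omega) hco₁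
    exact ⟨_, (h.add_neg_const hiso).floquetIsospectral_of_fin_one (hco 0)⟩

theorem exists_sumEquiv_blockEmbed {r d : ℕ} (D : Fin r → ℕ) (hsum : ∑ j, D j = d) (j : Fin r) :
    ∃ (k : ℕ) (e : Fin (D j) ⊕ Fin k ≃ Fin d), (∀ i, e (.inl i) = blockEmbed D hsum j i) ∧
      ∀ Vj : (j : Fin r) → (Fin (D j) → ℤ) → ℝ, ∃ W : (Fin k → ℤ) → ℝ, ∀ n : Fin d → ℤ,
        ∑ j, Vj j (fun i ↦ n (blockEmbed D hsum j i))
          = Vj j (fun i ↦ n (e (.inl i))) + W (fun i ↦ n (e (.inr i))) := by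
  obtain ⟨k, e, he⟩ := exists_sumEquiv_apply_inl (blockEmbed_injective D hsum j)
  refine ⟨k, e, he, fun Vj ↦ ⟨fun m ↦ ∑ l ∈ Finset.univ.erase j,
    Vj l fun i ↦ Sum.elim 0 m (e.symm (blockEmbed D hsum l i)), fun n ↦ ?_⟩⟩
  rw [← Finset.add_sum_erase _ _ (Finset.mem_univ j)]
  simp only [he]
  congr 1
  refine Finset.sum_congr rfl fun l hl ↦ congrArg (Vj l) (funext fun i ↦ ?_)
  refine (sumElim_symm_apply_of_notMem_range e 0 n ?_).symm
  rw [show e ∘ Sum.inl = blockEmbed D hsum j from funext he]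
  exact blockEmbed_notMem_range_of_ne D hsum (Finset.ne_of_mem_erase hl) i

theorem fermi_isospectral_separable_blocks_floquet_isospectral_general {d r : ℕ} (hd : 3 ≤ d)
    (hr : 2 ≤ r) {q : Fin d → ℕ} (hq : ∀ j, 0 < q j)
    (hco : ∀ i j : Fin d, i ≠ j → Nat.Coprime (q i) (q j))
    {D : Fin r → ℕ} (hD : ∀ j, 1 ≤ D j) (hsum : ∑ j, D j = d) {V Y : (Fin d → ℤ) → ℝ}
    {Vj Yj : (j : Fin r) → (Fin (D j) → ℤ) → ℝ}
    (hVsep : ∀ n : Fin d → ℤ, V n = ∑ j, Vj j (fun i => n (blockEmbed D hsum j i)))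
    (hYsep : ∀ n : Fin d → ℤ, Y n = ∑ j, Yj j (fun i => n (blockEmbed D hsum j i)))
    {lam0 : ℂ} (hFermi : ∀ z : Fin d → ℂ, (∀ j, z j ≠ 0) →
      floquetDet d q V z lam0 = 0 → floquetDet d q Y z lam0 = 0) (j : Fin r) :
    ∃ C : ℝ, FloquetIsospectral (D j) (fun i => q (blockEmbed D hsum j i))
      (fun m => Vj j m + C) (Yj j) := by
  obtain ⟨k, e, he, hrest⟩ := exists_sumEquiv_blockEmbed D hsum j
  obtain ⟨VR, hVR⟩ := hrest Vj
  obtain ⟨YR, hYR⟩ := hrest Yj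
  have hcard : D j + k = d := by simpa using Fintype.card_congr e
  have : Nontrivial (Fin r) := Fin.nontrivial_iff_two_le.2 hr
  obtain ⟨l, hl⟩ := exists_ne j
  have hlt : D j < d := hsum ▸ Finset.single_lt_sum hl (Finset.mem_univ j) (Finset.mem_univ l)
    (hD l) fun _ _ _ ↦ Nat.zero_le _
  have (j : Fin d) : NeZero (q j) := ⟨(hq j).ne'⟩
  have : NeZero (D j) := ⟨Nat.one_le_iff_ne_zero.1 (hD j)⟩
  have : NeZero k := ⟨by omega⟩
  simp only [← he]
  have hlink := fermiLinked_of_forall_floquetDet_eq_zero (fun n ↦ (hVsep n).trans (hVR n))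
    (fun n ↦ (hYsep n).trans (hYR n)) hFermi
  exact hlink.exists_floquetIsospectral_add_const (hcard ▸ hd)
    (fun _ _ h ↦ hco _ _ (e.injective.ne (Sum.inl_injective.ne h)))
    (fun _ _ h ↦ hco _ _ (e.injective.ne (Sum.inr_injective.ne h)))
    (fun _ _ ↦ hco _ _ (e.injective.ne Sum.inr_ne_inl))

end Development

/-- Theorem 1.4: if `V = ⊕ V_j` and `Y = ⊕ Y_j` are separable and Fermi
isospectral, then up to a constant the lower dimensional decompositions `V_j` and `Y_j` are
Floquet isospectral. -/
theorem fermi_isospectral_separable_blocks_floquet_isospectral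
    (d r : ℕ) (hd : 3 ≤ d) (hr : 2 ≤ r)
    (q : Fin d → ℕ) (hq : ∀ j, 0 < q j)
    (hco : ∀ i j : Fin d, i ≠ j → Nat.Coprime (q i) (q j))
    (D : Fin r → ℕ) (hD : ∀ j, 1 ≤ D j) (hsum : ∑ j, D j = d)
    (V Y : (Fin d → ℤ) → ℝ)
    (hVper : IsPeriodicPotential d q V) (hYper : IsPeriodicPotential d q Y)
    (Vj Yj : (j : Fin r) → (Fin (D j) → ℤ) → ℝ)
    (hVsep : ∀ n : Fin d → ℤ, V n = ∑ j, Vj j (fun i => n (blockEmbed D hsum j i)))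
    (hYsep : ∀ n : Fin d → ℤ, Y n = ∑ j, Yj j (fun i => n (blockEmbed D hsum j i)))
    (hFermi : FermiIsospectral d q V Y) :
    ∀ j : Fin r, ∃ C : ℝ,
      FloquetIsospectral (D j) (fun i => q (blockEmbed D hsum j i))
        (fun m => Vj j m + C) (Yj j) := by
  obtain ⟨lam0, hlam0⟩ := hFermi
  exact fermi_isospectral_separable_blocks_floquet_isospectral_general hd hr hq hco hD hsum
    hVsep hYsep fun z hz h ↦ (hlam0.subset ⟨hz, h⟩).2

end
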